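/- arXiv:2209.03999 — 4 statements merged into one kernel-verified Lean document; each statement's English description precedes it below -/
import Mathlib

section
/- Fix constants 0 < q < p < 1 and K > 0, and set C := q³/(2(1−q)p²). There exists M > 0 such that for all sufficiently large n, all integers Δ ≥ 0 with 0 ≤ Δ' ≤ K·√(n·log n), and all real p̃ with |p̃ − p| ≤ K·(log n)/n, one has (1/(M·√(log n)))·exp(−C·Δ'²·(n+Δ)/n²) ≤ P[Bin(n+Δ, q) > n·p̃] ≤ M·exp(−C·Δ'²·(n+Δ)/n²). -/
/-!
Write `m = n + Δ` and `D = ((p - q) / q) n - Δ`. Then `m q = p n - q D`, so the threshold `n p'`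
exceeds the mean of `Bin(m, q)` by `q D + O(log n)`, and the Gaussian heuristic gives the exponent
`(q D)² / (2 m q (1 - q))`. Since `p n = q (m + D)`, this differs from the exponent in the theorem
by `O(D³ / m²) = o(1)` (`exponent_bounds`), and the `O(log n)` shift of the threshold changes it by
`O(D log n / n) = o(1)`.

The upper bound is Chernoff's inequality (`binomProb_le_exp`) at the tilt `t = D / (m (1 - q))`.
For the lower bound, Stirling's formula bounds each point mass near the mean from below by
`c / √m` times the Gaussian factor (`exists_binomPMF_lower`). Moving by at most `√n / √(log n)` past
the threshold changes the Gaussian exponent by `O(1)`, because `D · √n / √(log n) = O(n)`; summing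
over these `√n / √(log n)` points produces the factor `1 / √(log n)`.
-/

open Finset

/-- Probability mass function of the binomial distribution `Bin(m, r)`. -/
noncomputable def binomPMF (m : ℕ) (r : ℝ) (k : ℕ) : ℝ :=
  (m.choose k : ℝ) * r ^ k * (1 - r) ^ (m - k)

/-- `P[X ∈ P]` for `X ~ Bin(m, r)`. -/
noncomputable def binomProb (m : ℕ) (r : ℝ) (P : ℕ → Prop) : ℝ :=
  ∑ k ∈ Finset.range (m + 1), Set.indicator {k | P k} (binomPMF m r) k

/-- `P[(X, Y) ∈ P]` for independent `X ~ Bin(m₁, r₁)` and `Y ~ Bin(m₂, r₂)`. -/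
noncomputable def binomProb2 (m₁ : ℕ) (r₁ : ℝ) (m₂ : ℕ) (r₂ : ℝ) (P : ℕ → ℕ → Prop) : ℝ :=
  ∑ j ∈ Finset.range (m₁ + 1), ∑ k ∈ Finset.range (m₂ + 1),
    Set.indicator {jk : ℕ × ℕ | P jk.1 jk.2}
      (fun jk => binomPMF m₁ r₁ jk.1 * binomPMF m₂ r₂ jk.2) (j, k)

/-! ### Point masses near the mean -/

/-- Second-order expansion of the entropy function `v ↦ v log v` at `v = 1`. -/
lemma one_add_mul_log_le {u : ℝ} (hu : |u| ≤ 1 / 2) :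
    (1 + u) * Real.log (1 + u) ≤ u + u ^ 2 / 2 + 4 * |u| ^ 3 := by
  have h1 := Real.abs_log_sub_add_sum_range_le (x := -u) (by rw [abs_neg]; linarith) 2
  simp only [Finset.sum_range_succ, Finset.sum_range_zero, abs_neg, sub_neg_eq_add] at h1
  have h0 := abs_nonneg u
  have h2 : |u| ^ (2 + 1) / (1 - |u|) ≤ 2 * |u| ^ 3 := by
    rw [div_le_iff₀ (by linarith), show |u| ^ (2 + 1) = |u| ^ 3 from rfl]
    nlinarith [mul_nonneg (pow_nonneg h0 3) (show 0 ≤ 1 - 2 * |u| by linarith)]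
  have h3 := (le_abs_self _).trans (h1.trans h2)
  norm_num at h3
  have h4 : Real.log (1 + u) ≤ u - u ^ 2 / 2 + 2 * |u| ^ 3 := by linarith
  have hu' := abs_le.1 hu
  have h5 := mul_le_mul_of_nonneg_left h4 (show 0 ≤ 1 + u by linarith)
  have h6 : -u ^ 3 ≤ |u| ^ 3 := by
    rw [← abs_pow]; exact neg_le_abs _
  have h7 : (1 + u) * (2 * |u| ^ 3) ≤ 3 * |u| ^ 3 := by
    nlinarith [pow_nonneg h0 3]
  nlinarith [pow_nonneg h0 3]

/-- The factor `(A / k) ^ k` arising in Stirling's formula, expanded for `k = A + x`. -/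
lemma exp_le_div_pow {A x : ℝ} {k : ℕ} (hA : 0 < A) (hk : (k : ℝ) = A + x) (hx : |x| ≤ A / 2) :
    Real.exp (-(x + x ^ 2 / (2 * A) + 4 * |x| ^ 3 / A ^ 2)) ≤ (A / k) ^ k := by
  have hx' := abs_le.1 hx
  have hk0 : (0 : ℝ) < k := by rw [hk]; linarith
  have hu : |x / A| ≤ 1 / 2 := by
    rw [abs_div, abs_of_pos hA, div_le_iff₀ hA]; linarith
  have h := mul_le_mul_of_nonneg_left (one_add_mul_log_le hu) hA.le
  have e1 : 1 + x / A = k / A := by rw [hk]; field_simp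
  have e2 : A * (x / A + (x / A) ^ 2 / 2 + 4 * |x / A| ^ 3)
      = x + x ^ 2 / (2 * A) + 4 * |x| ^ 3 / A ^ 2 := by
    rw [abs_div, abs_of_pos hA]; field_simp
  have e3 : A * (k / A * Real.log (k / A)) = k * Real.log (k / A) := by field_simp
  rw [e1, e2, e3] at h
  have e4 : Real.log (A / k) = -Real.log (k / A) := by rw [← Real.log_inv, inv_div]
  rw [← Real.exp_log (show 0 < (A / k) ^ k by positivity), Real.log_pow, Real.exp_le_exp, e4]
  linarith

/-- Stirling's formula as a two-sided bound with absolute constants. -/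
lemma exists_stirling_bounds : ∃ S : ℝ, 0 < S ∧ ∀ n : ℕ, 0 < n →
    √(2 * n) * (n / Real.exp 1) ^ n ≤ n.factorial ∧
    (n.factorial : ℝ) ≤ S * (√(2 * n) * (n / Real.exp 1) ^ n) := by
  refine ⟨Stirling.stirlingSeq 1, ?_, fun n hn => ?_⟩
  · exact (Real.sqrt_pos.2 Real.pi_pos).trans_le (Stirling.sqrt_pi_le_stirlingSeq one_ne_zero)
  have hn' : (0 : ℝ) < n := by exact_mod_cast hn
  have hpos : 0 < √(2 * n) * (n / Real.exp 1) ^ n := by positivity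
  constructor
  · have h := Stirling.sqrt_pi_le_stirlingSeq hn.ne'
    have h1 : (1 : ℝ) ≤ √Real.pi := by
      rw [Real.one_le_sqrt]; linarith [Real.pi_gt_three]
    have h2 := h1.trans h
    rw [Stirling.stirlingSeq, le_div_iff₀ hpos] at h2
    linarith
  · obtain ⟨j, rfl⟩ := Nat.exists_eq_succ_of_ne_zero hn.ne'
    have h : Stirling.stirlingSeq (j + 1) ≤ Stirling.stirlingSeq 1 :=
      Stirling.stirlingSeq'_antitone (Nat.zero_le j)
    rw [Stirling.stirlingSeq, div_le_iff₀ hpos] at h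
    exact h

/-- One half of the local central limit theorem, with an explicit cubic error term. -/
lemma exists_binomPMF_lower (q : ℝ) (hq : 0 < q) (hq1 : q < 1) : ∃ c : ℝ, 0 < c ∧
    ∀ (m k : ℕ) (x : ℝ), 0 < m → (k : ℝ) = m * q + x → |x| ≤ m * q / 2 → |x| ≤ m * (1 - q) / 2 →
      c / √m * Real.exp (-(x ^ 2 / (2 * (m * q * (1 - q))) +
        4 * (1 / q ^ 2 + 1 / (1 - q) ^ 2) * (|x| ^ 3 / m ^ 2))) ≤ binomPMF m q k := by
  obtain ⟨S, hS, hst⟩ := exists_stirling_bounds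
  refine ⟨1 / S ^ 2, by positivity, fun m k x hm hk hx1 hx2 => ?_⟩
  have hm' : (0 : ℝ) < m := by exact_mod_cast hm
  have h1q : 0 < 1 - q := by linarith
  have hA : 0 < m * q := by positivity
  have hB : 0 < m * (1 - q) := by positivity
  have hx1' := abs_le.1 hx1
  have hx2' := abs_le.1 hx2
  have hk0 : (0 : ℝ) < k := by rw [hk]; linarith
  have hkm : (k : ℝ) < m := by rw [hk]; nlinarith
  have hkm' : k < m := by exact_mod_cast hkm
  obtain ⟨j, hj⟩ := Nat.exists_eq_add_of_le hkm'.le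
  have hmr : (m : ℝ) = k + j := by rw [hj]; push_cast; ring
  have hj0 : (0 : ℝ) < j := by linarith
  have b1 := exp_le_div_pow hA hk hx1
  have b2 := exp_le_div_pow (x := -x) (k := j) hB (by linarith) (by rwa [abs_neg])
  have b3 := mul_le_mul b1 b2 (Real.exp_pos _).le (by positivity)
  rw [← Real.exp_add] at b3
  have e1 : -(x + x ^ 2 / (2 * (m * q)) + 4 * |x| ^ 3 / (m * q) ^ 2) +
      -(-x + (-x) ^ 2 / (2 * (m * (1 - q))) + 4 * |-x| ^ 3 / (m * (1 - q)) ^ 2) =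
      -(x ^ 2 / (2 * (m * q * (1 - q))) +
        4 * (1 / q ^ 2 + 1 / (1 - q) ^ 2) * (|x| ^ 3 / m ^ 2)) := by
    rw [abs_neg]; field_simp; ring
  rw [e1] at b3
  have hch : (m.choose k : ℝ) = m.factorial / (k.factorial * j.factorial) := by
    rw [Nat.cast_choose ℝ hkm'.le, show m - k = j by omega]
  have f1 := (hst m hm).1
  have f2 := (hst k (by exact_mod_cast hk0)).2
  have f3 := (hst j (by exact_mod_cast hj0)).2
  have hk1 := k.factorial_pos
  have hj1 := j.factorial_pos
  have g1 : √(2 * m) * (m / Real.exp 1) ^ m /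
      (S * (√(2 * k) * (k / Real.exp 1) ^ k) * (S * (√(2 * j) * (j / Real.exp 1) ^ j)))
      ≤ m.choose k := by
    rw [hch]; gcongr
  have g2 : √(2 * m) * (m / Real.exp 1) ^ m /
      (S * (√(2 * k) * (k / Real.exp 1) ^ k) * (S * (√(2 * j) * (j / Real.exp 1) ^ j)))
      = 1 / S ^ 2 * (√(2 * m) / (√(2 * k) * √(2 * j))) * (((m : ℝ) / k) ^ k * (m / j) ^ j) := by
    have : ((m : ℝ) / Real.exp 1) ^ m = (m / Real.exp 1) ^ k * (m / Real.exp 1) ^ j := by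
      rw [← pow_add, ← hj]
    rw [this]
    simp only [div_pow]
    field_simp
  have g3 : 1 / √m ≤ √(2 * m) / (√(2 * k) * √(2 * j)) := by
    rw [div_le_div_iff₀ (by positivity) (by positivity), one_mul,
      ← Real.sqrt_mul (by positivity), ← Real.sqrt_mul (by positivity)]
    apply Real.sqrt_le_sqrt
    rw [hmr]; nlinarith [sq_nonneg ((k : ℝ) - j)]
  have g4 : binomPMF m q k = m.choose k * (q ^ k * (1 - q) ^ j) := by
    rw [binomPMF, show m - k = j by omega, mul_assoc]
  rw [g4]
  calc _ ≤ 1 / S ^ 2 / √m * ((m * q / k) ^ k * (m * (1 - q) / j) ^ j) := by gcongr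
    _ = 1 / S ^ 2 * (1 / √m) * (((m : ℝ) / k) ^ k * (m / j) ^ j) * (q ^ k * (1 - q) ^ j) := by
      rw [mul_div_right_comm, mul_div_right_comm, mul_pow, mul_pow]; ring
    _ ≤ 1 / S ^ 2 * (√(2 * m) / (√(2 * k) * √(2 * j))) * (((m : ℝ) / k) ^ k * (m / j) ^ j)
        * (q ^ k * (1 - q) ^ j) := by gcongr
    _ ≤ _ := by rw [← g2]; gcongr

/-! ### The Chernoff bound -/

lemma binomPMF_nonneg {q : ℝ} (hq : 0 < q) (hq1 : q < 1) (m k : ℕ) : 0 ≤ binomPMF m q k := by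
  have : 0 < 1 - q := by linarith
  unfold binomPMF; positivity

lemma exp_le_cubic {u : ℝ} (hu : |u| ≤ 1) : Real.exp u ≤ 1 + u + u ^ 2 / 2 + |u| ^ 3 := by
  have h := (le_abs_self _).trans (Real.exp_bound hu (n := 3) (by norm_num))
  simp only [Finset.sum_range_succ, Finset.sum_range_zero] at h
  norm_num [Nat.factorial] at h
  linarith [pow_nonneg (abs_nonneg u) 3]

/-- Chernoff's bound, with the moment generating function expanded to second order. -/
lemma binomProb_le_exp {q : ℝ} (hq : 0 < q) (hq1 : q < 1) (m : ℕ) (a t : ℝ) (ht : 0 ≤ t)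
    (ht1 : t ≤ 1) :
    binomProb m q (fun k => a < (k : ℝ)) ≤
      Real.exp (-(t * (a - m * q)) + m * (q * (1 - q) * t ^ 2 / 2 + t ^ 3)) := by
  have h1q : 0 < 1 - q := by linarith
  have h1 : binomProb m q (fun k => a < (k : ℝ)) ≤
      ∑ k ∈ Finset.range (m + 1), binomPMF m q k * Real.exp (t * (k - a)) := by
    unfold binomProb
    refine Finset.sum_le_sum fun k _ => ?_
    have h0 := binomPMF_nonneg hq hq1 m k
    by_cases hk : a < (k : ℝ)
    · rw [Set.indicator_of_mem (by exact hk)]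
      refine le_mul_of_one_le_right h0 (Real.one_le_exp ?_)
      exact mul_nonneg ht (by linarith)
    · rw [Set.indicator_of_notMem (by exact hk)]
      positivity
  have h2 : ∑ k ∈ Finset.range (m + 1), binomPMF m q k * Real.exp (t * (k - a)) =
      Real.exp (-(t * (a - m * q))) *
        (q * Real.exp ((1 - q) * t) + (1 - q) * Real.exp (-(q * t))) ^ m := by
    rw [add_pow, Finset.mul_sum]
    refine Finset.sum_congr rfl fun k hk => ?_
    have hk' : k ≤ m := by simpa [Nat.lt_succ_iff] using hk
    rw [binomPMF, mul_pow, mul_pow, ← Real.exp_nat_mul, ← Real.exp_nat_mul]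
    have : Real.exp (t * (k - a)) = Real.exp (-(t * (a - m * q))) *
        Real.exp (k * ((1 - q) * t)) * Real.exp (((m - k : ℕ) : ℝ) * -(q * t)) := by
      rw [← Real.exp_add, ← Real.exp_add, Nat.cast_sub hk']; congr 1; ring
    rw [this]; ring
  have a1 : |(1 - q) * t| = (1 - q) * t := abs_of_nonneg (by positivity)
  have a2 : |-(q * t)| = q * t := by rw [abs_neg]; exact abs_of_nonneg (by positivity)
  have k1 := exp_le_cubic (u := (1 - q) * t) (by rw [a1]; nlinarith)
  have k2 := exp_le_cubic (u := -(q * t)) (by rw [a2]; nlinarith)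
  rw [a1] at k1; rw [a2] at k2
  have h3 : q * Real.exp ((1 - q) * t) + (1 - q) * Real.exp (-(q * t)) ≤
      Real.exp (q * (1 - q) * t ^ 2 / 2 + t ^ 3) := by
    have k3 := Real.add_one_le_exp (q * (1 - q) * t ^ 2 / 2 + t ^ 3)
    have k4 := mul_le_mul_of_nonneg_left k1 hq.le
    have k5 := mul_le_mul_of_nonneg_left k2 h1q.le
    have k6 : q * (1 - q) ^ 3 + (1 - q) * q ^ 3 ≤ 1 := by
      have : (1 - q) ^ 3 ≤ 1 := pow_le_one₀ h1q.le (by linarith)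
      have : q ^ 3 ≤ 1 := pow_le_one₀ hq.le hq1.le
      nlinarith
    have k7 := mul_le_mul_of_nonneg_right k6 (pow_nonneg ht 3)
    nlinarith
  calc _ ≤ _ := h1
    _ = _ := h2
    _ ≤ Real.exp (-(t * (a - m * q))) * Real.exp (q * (1 - q) * t ^ 2 / 2 + t ^ 3) ^ m := by
      gcongr
    _ = _ := by rw [← Real.exp_nat_mul, ← Real.exp_add]

/-! ### Tail bounds in terms of the shifted parameters -/

/-- The exponent of the statement, written `q³/(2(1-q)p²) · D² m / n²` with `pn = q(m + D)`, agrees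
with the Gaussian exponent `(qD)² / (2mq(1-q))` up to an error of order `D³ / m²`, and never
exceeds it in absolute value. -/
lemma exponent_bounds {p q n m D : ℝ} (hp : 0 < p) (hq : 0 < q) (hq1 : q < 1)
    (hm : 0 < m) (hD : 0 ≤ D) (h : m * q = p * n - q * D) :
    -((q * D) ^ 2 / (2 * (m * q * (1 - q)))) ≤
        -(q ^ 3 / (2 * (1 - q) * p ^ 2)) * D ^ 2 * m / n ^ 2 ∧
      -(q ^ 3 / (2 * (1 - q) * p ^ 2)) * D ^ 2 * m / n ^ 2 ≤
        -((q * D) ^ 2 / (2 * (m * q * (1 - q)))) + q / (1 - q) * (D ^ 3 / m ^ 2) := by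
  have h1q : 0 < 1 - q := by linarith
  have hmD : 0 < m + D := by linarith
  have e : n = q * (m + D) / p := by field_simp; linarith
  have e1 : -(q ^ 3 / (2 * (1 - q) * p ^ 2)) * D ^ 2 * m / n ^ 2 =
      -(q / (2 * (1 - q)) * D ^ 2 * (m / (m + D) ^ 2)) := by
    rw [e]; field_simp
  have e2 : (q * D) ^ 2 / (2 * (m * q * (1 - q))) = q / (2 * (1 - q)) * D ^ 2 * (1 / m) := by
    field_simp
  have i1 : m / (m + D) ^ 2 ≤ 1 / m := by
    rw [div_le_div_iff₀ (by positivity) hm]; nlinarith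
  have i2 : 1 / m - 2 * D / m ^ 2 ≤ m / (m + D) ^ 2 := by
    have : 1 / m - 2 * D / m ^ 2 = (m - 2 * D) / m ^ 2 := by field_simp
    rw [this, div_le_div_iff₀ (by positivity) (by positivity)]
    have := mul_nonneg hm.le (sq_nonneg D)
    have := pow_nonneg hD 3
    nlinarith
  have hc : 0 ≤ q / (2 * (1 - q)) * D ^ 2 := by positivity
  rw [e1, e2]
  constructor
  · have := mul_le_mul_of_nonneg_left i1 hc
    linarith
  · have := mul_le_mul_of_nonneg_left i2 hc
    have e3 : q / (2 * (1 - q)) * D ^ 2 * (1 / m - 2 * D / m ^ 2) =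
        q / (2 * (1 - q)) * D ^ 2 * (1 / m) - q / (1 - q) * (D ^ 3 / m ^ 2) := by
      field_simp
    linarith

/-- Upper tail bound; here `r` and `s` play the roles of `√n` and `√(log n)`. -/
lemma binomProb_upper {p q K : ℝ} (hp : 0 < p) (hq : 0 < q) (hq1 : q < 1) (hK : 0 < K)
    {n m : ℕ} {D r s p' : ℝ} (hs : 1 ≤ s) (hr : 0 < r) (hsr : s ^ 3 ≤ r)
    (hKs : K / (1 - q) * s ≤ r) (hrn : r ^ 2 = n)
    (hm : m * q = p * n - q * D) (hnm : n ≤ m) (hD : 0 ≤ D) (hDK : D ≤ K * (r * s))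
    (hp' : |n * p' - n * p| ≤ K * s ^ 2) :
    binomProb m q (fun k => (n : ℝ) * p' < (k : ℝ)) ≤
      Real.exp (K ^ 2 / (1 - q) + (K / (1 - q)) ^ 3) *
        Real.exp (-(q ^ 3 / (2 * (1 - q) * p ^ 2)) * D ^ 2 * m / n ^ 2) := by
  have h1q : 0 < 1 - q := by linarith
  have hn0 : (0 : ℝ) < n := by rw [← hrn]; positivity
  have hnm' : (n : ℝ) ≤ m := by exact_mod_cast hnm
  have hm0 : (0 : ℝ) < m := by linarith
  set t : ℝ := D / (m * (1 - q)) with ht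
  have ht0 : 0 ≤ t := by positivity
  have htr : t * r ≤ K / (1 - q) * s := by
    rw [ht, div_mul_eq_mul_div, div_mul_eq_mul_div, div_le_div_iff₀ (by positivity) h1q]
    have : D * r ≤ K * s * m := by
      calc D * r ≤ K * (r * s) * r := by gcongr
        _ = K * s * n := by rw [← hrn]; ring
        _ ≤ _ := by gcongr
    nlinarith
  have ht1 : t ≤ 1 := by
    by_contra hcon
    push Not at hcon
    nlinarith
  refine (binomProb_le_exp hq hq1 m (n * p') t ht0 ht1).trans ?_
  rw [← Real.exp_add, Real.exp_le_exp]
  have hE := (exponent_bounds hp hq hq1 hm0 hD hm).1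
  have e1 : -((q * D) ^ 2 / (2 * (m * q * (1 - q)))) =
      -(t * (q * D)) + m * (q * (1 - q) * t ^ 2 / 2) := by
    rw [ht]; field_simp; ring
  have h1 : -(t * (n * p' - n * p)) ≤ K ^ 2 / (1 - q) := by
    have a := (abs_le.1 hp').1
    have b : t * (K * s ^ 2) ≤ K ^ 2 / (1 - q) := by
      have c : t * (K * s ^ 2) * r ≤ K ^ 2 / (1 - q) * r := by
        calc t * (K * s ^ 2) * r = (t * r) * (K * s ^ 2) := by ring
          _ ≤ (K / (1 - q) * s) * (K * s ^ 2) := by gcongr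
          _ = K ^ 2 / (1 - q) * s ^ 3 := by ring
          _ ≤ _ := by gcongr
      exact le_of_mul_le_mul_right c hr
    nlinarith
  have h2 : m * t ^ 3 ≤ (K / (1 - q)) ^ 3 := by
    have c1 : m * t ^ 3 = (D / (1 - q)) ^ 3 / m ^ 2 := by rw [ht]; field_simp
    rw [c1, div_le_iff₀ (by positivity)]
    calc (D / (1 - q)) ^ 3 ≤ (K * (r * s) / (1 - q)) ^ 3 := by gcongr
      _ = (K / (1 - q)) ^ 3 * (r ^ 3 * s ^ 3) := by ring
      _ ≤ (K / (1 - q)) ^ 3 * (r ^ 3 * r) := by gcongr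
      _ = (K / (1 - q)) ^ 3 * (n : ℝ) ^ 2 := by rw [← hrn]; ring
      _ ≤ _ := by gcongr
  have e2 : (n : ℝ) * p' - m * q = (n * p' - n * p) + q * D := by rw [hm]; ring
  rw [e2]
  linarith

set_option maxHeartbeats 1600000 in
/-- Lower tail bound; here `r` and `s` play the roles of `√n` and `√(log n)`. -/
lemma exists_binomProb_lower {p q K : ℝ} (hp : 0 < p) (hq : 0 < q) (hq1 : q < 1) (hK : 0 < K) :
    ∃ c : ℝ, 0 < c ∧ ∀ {n m : ℕ} {D r s p' : ℝ}, 1 ≤ s → 0 < r → s ^ 3 ≤ r →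
      K * s ^ 3 ≤ p * r → (2 * K + 1) * s ^ 3 ≤ q / 2 * r →
      (2 * K + 1) * s ^ 3 ≤ (1 - q) / 2 * r → r ^ 2 = n →
      m * q = p * n - q * D → n ≤ m → 0 ≤ D → D ≤ K * (r * s) → |n * p' - n * p| ≤ K * s ^ 2 →
      c / s * Real.exp (-(q ^ 3 / (2 * (1 - q) * p ^ 2)) * D ^ 2 * m / n ^ 2) ≤
        binomProb m q (fun k => (n : ℝ) * p' < (k : ℝ)) := by
  obtain ⟨c, hc, hpmf⟩ := exists_binomPMF_lower q hq hq1
  have h1q : 0 < 1 - q := by linarith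
  set G : ℝ := 4 * (1 / q ^ 2 + 1 / (1 - q) ^ 2) with hG
  have hG0 : 0 < G := by positivity
  set E : ℝ := (2 * q * K * (K + 1) + (K + 1) ^ 2) / (2 * (q * (1 - q))) + G * (2 * K + 1) ^ 3
    + q / (1 - q) * K ^ 3 with hE
  refine ⟨c / (2 * √(p / q)) * Real.exp (-E), by positivity, ?_⟩
  intro n m D r s p' hs hr hsr hKp hKq hKq' hrn hm hnm hD hDK hp'
  have hs0 : 0 < s := by linarith
  have hn0 : (0 : ℝ) < n := by rw [← hrn]; positivity
  have hnm' : (n : ℝ) ≤ m := by exact_mod_cast hnm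
  have hm0 : (0 : ℝ) < m := by linarith
  have hr2m : r ^ 2 ≤ m := by rw [hrn]; exact hnm'
  have hs13 : s ≤ s ^ 3 := le_self_pow₀ hs (by norm_num)
  have hs23 : s ^ 2 ≤ s ^ 3 := pow_le_pow_right₀ hs (by norm_num)
  have hr1 : 1 ≤ r := by linarith
  have hp'' := abs_le.1 hp'
  have hDr : D ^ 3 / m ^ 2 ≤ K ^ 3 := by
    rw [div_le_iff₀ (by positivity)]
    calc D ^ 3 ≤ (K * (r * s)) ^ 3 := by gcongr
      _ = K ^ 3 * (r ^ 3 * s ^ 3) := by ring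
      _ ≤ K ^ 3 * (r ^ 3 * r) := by gcongr
      _ = K ^ 3 * (r ^ 2) ^ 2 := by ring
      _ ≤ _ := by gcongr
  have hexp := (exponent_bounds hp hq hq1 hm0 hD hm).2
  set X : ℝ := -(q ^ 3 / (2 * (1 - q) * p ^ 2)) * D ^ 2 * m / n ^ 2 with hX
  -- each of the first `r / s` integers above the threshold has mass of the same order
  have key : ∀ k : ℕ, (n : ℝ) * p' < k → (k : ℝ) ≤ n * p' + r / s → k < m + 1 ∧
      c / √m * Real.exp (X - E) ≤ binomPMF m q k := by
    intro k hk1 hk2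
    set y : ℝ := k - p * n with hy
    have hs2r : s ^ 2 ≤ r / s := by
      rw [le_div_iff₀ hs0]; linarith [show s ^ 2 * s = s ^ 3 by ring]
    have hrs0 : 0 < r / s := by positivity
    have hyabs : |y| ≤ (K + 1) * (r / s) := by
      have := mul_le_mul_of_nonneg_left hs2r hK.le
      rw [abs_le]
      constructor <;> rw [hy] <;> linarith
    have hrs : r / s ≤ r * s :=
      (div_le_self hr.le hs).trans (le_mul_of_one_le_right hr.le hs)
    set x : ℝ := q * D + y with hx
    have hxabs : |x| ≤ (2 * K + 1) * (r * s) := by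
      have a1 : |x| ≤ |q * D| + |y| := abs_add_le _ _
      rw [abs_of_nonneg (by positivity : 0 ≤ q * D)] at a1
      have a2 : q * D ≤ K * (r * s) := (mul_le_of_le_one_left hD hq1.le).trans hDK
      have a3 := mul_le_mul_of_nonneg_left hrs (by linarith : 0 ≤ K + 1)
      linarith
    have hsmall : ∀ a : ℝ, 0 < a → (2 * K + 1) * s ^ 3 ≤ a / 2 * r → |x| ≤ m * a / 2 := by
      intro a ha h
      calc |x| ≤ (2 * K + 1) * (r * s) := hxabs
        _ ≤ (2 * K + 1) * (r * s ^ 3) := by gcongr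
        _ = ((2 * K + 1) * s ^ 3) * r := by ring
        _ ≤ (a / 2 * r) * r := by gcongr
        _ = r ^ 2 * a / 2 := by ring
        _ ≤ _ := by gcongr
    have hxq := hsmall q hq hKq
    have hxq' := hsmall (1 - q) h1q hKq'
    have hkx : (k : ℝ) = m * q + x := by rw [hx, hy, hm]; ring
    have hkm : k ≤ m := by
      have : (k : ℝ) ≤ m := by
        rw [hkx]; nlinarith [(abs_le.1 hxq').2]
      exact_mod_cast this
    refine ⟨by omega, le_trans ?_ (hpmf m k x (by exact_mod_cast hm0) hkx hxq hxq')⟩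
    have h3 : |x| ^ 3 / m ^ 2 ≤ (2 * K + 1) ^ 3 := by
      rw [div_le_iff₀ (by positivity)]
      calc |x| ^ 3 ≤ ((2 * K + 1) * (r * s)) ^ 3 := by gcongr
        _ = (2 * K + 1) ^ 3 * (r ^ 3 * s ^ 3) := by ring
        _ ≤ (2 * K + 1) ^ 3 * (r ^ 3 * r) := by gcongr
        _ = (2 * K + 1) ^ 3 * (r ^ 2) ^ 2 := by ring
        _ ≤ _ := by gcongr
    have h2 : x ^ 2 / (2 * (m * q * (1 - q))) ≤ (q * D) ^ 2 / (2 * (m * q * (1 - q))) +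
        (2 * q * K * (K + 1) + (K + 1) ^ 2) / (2 * (q * (1 - q))) := by
      have b1 : D * y ≤ K * (K + 1) * m := by
        calc D * y ≤ D * |y| := by gcongr; exact le_abs_self y
          _ ≤ (K * (r * s)) * ((K + 1) * (r / s)) := by gcongr
          _ = K * (K + 1) * r ^ 2 := by field_simp
          _ ≤ _ := by gcongr
      have b2 : y ^ 2 ≤ (K + 1) ^ 2 * m := by
        calc y ^ 2 = |y| ^ 2 := (sq_abs y).symm
          _ ≤ ((K + 1) * r) ^ 2 := by
            gcongr
            refine hyabs.trans ?_
            gcongr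
            exact div_le_self hr.le hs
          _ = (K + 1) ^ 2 * r ^ 2 := by ring
          _ ≤ _ := by gcongr
      have b3 : x ^ 2 ≤ (q * D) ^ 2 + (2 * q * K * (K + 1) + (K + 1) ^ 2) * m := by
        rw [hx]; nlinarith
      have b4 : (2 * q * K * (K + 1) + (K + 1) ^ 2) / (2 * (q * (1 - q))) =
          (2 * q * K * (K + 1) + (K + 1) ^ 2) * m / (2 * (m * q * (1 - q))) := by
        field_simp
      rw [b4, ← add_div]
      gcongr
    have h4 := mul_le_mul_of_nonneg_left h3 hG0.le
    have h5 := mul_le_mul_of_nonneg_left hDr (by positivity : 0 ≤ q / (1 - q))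
    gcongr
    rw [hE]
    linarith
  have ha0 : 0 ≤ (n : ℝ) * p' := by
    have : K * s ^ 2 ≤ p * n := by
      calc K * s ^ 2 ≤ K * s ^ 3 := by gcongr
        _ ≤ p * r := hKp
        _ ≤ p * r ^ 2 := by gcongr; exact le_self_pow₀ hr1 (by norm_num)
        _ = _ := by rw [hrn]
    nlinarith
  have hrs1 : 1 ≤ r / s := by rw [le_div_iff₀ hs0]; linarith
  set J : ℕ := ⌊r / s⌋₊ with hJ
  set k0 : ℕ := ⌊(n : ℝ) * p'⌋₊ + 1 with hk0
  have hJ1 : (J : ℝ) ≤ r / s := Nat.floor_le (by positivity)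
  have hJ2 : r / s / 2 ≤ J := by
    have h1 : r / s < J + 1 := Nat.lt_floor_add_one _
    have h2 : (1 : ℝ) ≤ J := by
      exact_mod_cast (Nat.one_le_floor_iff _).2 hrs1
    linarith
  have hk : ∀ k ∈ Finset.Ico k0 (k0 + J), (n : ℝ) * p' < k ∧ (k : ℝ) ≤ n * p' + r / s := by
    intro k hk
    rw [Finset.mem_Ico] at hk
    have h1 : (n : ℝ) * p' < ⌊(n : ℝ) * p'⌋₊ + 1 := Nat.lt_floor_add_one _
    have h2 : (⌊(n : ℝ) * p'⌋₊ : ℝ) ≤ n * p' := Nat.floor_le ha0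
    have h3 : ((⌊(n : ℝ) * p'⌋₊ + 1 : ℕ) : ℝ) ≤ k := by exact_mod_cast hk.1
    have h4 : (k : ℝ) ≤ ((⌊(n : ℝ) * p'⌋₊ + J : ℕ) : ℝ) := by
      have : k ≤ ⌊(n : ℝ) * p'⌋₊ + J := by omega
      exact_mod_cast this
    push_cast at h3 h4
    constructor <;> linarith
  have hsum : (J : ℝ) * (c / √m * Real.exp (X - E)) ≤
      binomProb m q (fun k => (n : ℝ) * p' < (k : ℝ)) := by
    have h1 : Finset.Ico k0 (k0 + J) ⊆ Finset.range (m + 1) := fun k hkk =>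
      Finset.mem_range.2 (key k (hk k hkk).1 (hk k hkk).2).1
    have h2 := Finset.card_nsmul_le_sum (Finset.Ico k0 (k0 + J))
      (fun k => Set.indicator {k : ℕ | (n : ℝ) * p' < k} (binomPMF m q) k)
      (c / √m * Real.exp (X - E)) (fun k hkk => by
        rw [Set.indicator_of_mem (by exact (hk k hkk).1)]
        exact (key k (hk k hkk).1 (hk k hkk).2).2)
    rw [Nat.card_Ico, Nat.add_sub_cancel_left, nsmul_eq_mul] at h2
    exact h2.trans (Finset.sum_le_sum_of_subset_of_nonneg h1 fun k _ _ =>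
      Set.indicator_nonneg (fun k _ => binomPMF_nonneg hq hq1 m k) k)
  refine le_trans ?_ hsum
  have hsm : √m ≤ √(p / q) * r := by
    rw [Real.sqrt_le_left (by positivity), mul_pow, Real.sq_sqrt (by positivity), hrn,
      div_mul_eq_mul_div, le_div_iff₀ hq]
    nlinarith
  calc c / (2 * √(p / q)) * Real.exp (-E) / s * Real.exp X
      = r / s / 2 * (c / (√(p / q) * r) * Real.exp (X - E)) := by
        rw [sub_eq_add_neg, Real.exp_add]; field_simp
    _ ≤ J * (c / √m * Real.exp (X - E)) := by gcongr

/-! ### Asymptotics and the two-sided bound -/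

lemma eventually_sqrt_log_pow_le {η : ℝ} (hη : 0 < η) : ∀ᶠ n : ℕ in Filter.atTop,
    √(Real.log n) ^ 3 ≤ η * √n := by
  have h1 := (Real.isLittleO_pow_log_id_atTop (n := 3)).bound (show 0 < η ^ 2 by positivity)
  have h2 := tendsto_natCast_atTop_atTop (R := ℝ) |>.eventually h1
  filter_upwards [h2, Filter.eventually_ge_atTop 1] with n hn hn1
  have hL : 0 ≤ Real.log n := Real.log_natCast_nonneg n
  rw [Real.norm_of_nonneg (by positivity), id, Real.norm_of_nonneg (by positivity)] at hn
  refine (pow_le_pow_iff_left₀ (by positivity) (by positivity) two_ne_zero).1 ?_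
  rw [mul_pow, Real.sq_sqrt (by positivity), ← pow_mul, mul_comm 3 2, pow_mul,
    Real.sq_sqrt hL]
  exact hn

/-- Lemma 2.8 / `lemmaBinomialtail1`.
Fix constants `0 < q < p < 1` and `K > 0`, and set `C := q³/(2(1−q)p²)`.  There exists `M > 0`
such that for all sufficiently large `n`, all integers `Δ ≥ 0` with
`0 ≤ Δ' ≤ K·√(n·log n)` (where `Δ' = ((p−q)/q)·n − Δ`), and all real `p'` with
`|p' − p| ≤ K·(log n)/n`, one has
`(1/(M·√(log n)))·exp(−C·Δ'²·(n+Δ)/n²) ≤ P[Bin(n+Δ, q) > n·p'] ≤ M·exp(−C·Δ'²·(n+Δ)/n²)`. -/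
theorem binomial_tail_two_sided_bounds
    (p q K : ℝ) (hq : 0 < q) (hqp : q < p) (hp : p < 1) (hK : 0 < K) :
    ∃ M : ℝ, 0 < M ∧ ∃ N : ℕ, ∀ n : ℕ, N ≤ n → ∀ Δ : ℕ,
      0 ≤ ((p - q) / q) * n - Δ →
      ((p - q) / q) * n - Δ ≤ K * Real.sqrt (n * Real.log n) →
      ∀ p' : ℝ, |p' - p| ≤ K * Real.log n / n →
        1 / (M * Real.sqrt (Real.log n)) *
            Real.exp (-(q ^ 3 / (2 * (1 - q) * p ^ 2)) *
              (((p - q) / q) * n - Δ) ^ 2 * ((n : ℝ) + Δ) / (n : ℝ) ^ 2)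
          ≤ binomProb (n + Δ) q (fun k => (n : ℝ) * p' < (k : ℝ)) ∧
        binomProb (n + Δ) q (fun k => (n : ℝ) * p' < (k : ℝ))
          ≤ M * Real.exp (-(q ^ 3 / (2 * (1 - q) * p ^ 2)) *
              (((p - q) / q) * n - Δ) ^ 2 * ((n : ℝ) + Δ) / (n : ℝ) ^ 2) := by
  have hp0 : 0 < p := hq.trans hqp
  have hq1 : q < 1 := hqp.trans hp
  have h1q : 0 < 1 - q := by linarith
  obtain ⟨c, hc, hlow⟩ := exists_binomProb_lower hp0 hq hq1 hK
  set U : ℝ := Real.exp (K ^ 2 / (1 - q) + (K / (1 - q)) ^ 3) with hU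
  have hU0 : 0 < U := Real.exp_pos _
  have hev : ∀ a b : ℝ, 0 < a → 0 < b → ∀ᶠ n : ℕ in Filter.atTop,
      a * √(Real.log n) ^ 3 ≤ b * √n := by
    intro a b ha hb
    filter_upwards [eventually_sqrt_log_pow_le (div_pos hb ha)] with n hn
    have := mul_le_mul_of_nonneg_left hn ha.le
    calc _ ≤ _ := this
      _ = _ := by field_simp
  have hlog : ∀ᶠ n : ℕ in Filter.atTop, 1 ≤ Real.log n :=
    (Real.tendsto_log_atTop.comp tendsto_natCast_atTop_atTop).eventually_ge_atTop 1
  obtain ⟨N, hN⟩ := Filter.eventually_atTop.1 ((((((hev 1 1 one_pos one_pos).and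
    (hev (K / (1 - q)) 1 (by positivity) one_pos)).and (hev K p hK hp0)).and
    (hev (2 * K + 1) (q / 2) (by positivity) (by positivity))).and
    (hev (2 * K + 1) ((1 - q) / 2) (by positivity) (by positivity))).and
    (hlog.and (Filter.eventually_ge_atTop 1)))
  refine ⟨max U (1 / c), lt_max_of_lt_left hU0, N, fun n hn Δ hD hDK p' hp' => ?_⟩
  obtain ⟨⟨⟨⟨⟨h1, h2⟩, h3⟩, h4⟩, h5⟩, hL, hn1⟩ := hN n hn
  have hn0 : (0 : ℝ) < n := by exact_mod_cast hn1
  have hs : 1 ≤ √(Real.log n) := Real.one_le_sqrt.2 hL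
  have hr : 0 < √(n : ℝ) := Real.sqrt_pos.2 hn0
  have hrn : √(n : ℝ) ^ 2 = n := Real.sq_sqrt hn0.le
  have hm : ((n + Δ : ℕ) : ℝ) * q = p * n - q * ((p - q) / q * n - Δ) := by
    push_cast; field_simp; ring
  have hDK' : (p - q) / q * n - Δ ≤ K * (√n * √(Real.log n)) := by
    rwa [← Real.sqrt_mul hn0.le]
  have hp'' : |n * p' - n * p| ≤ K * √(Real.log n) ^ 2 := by
    rw [Real.sq_sqrt (by linarith), ← mul_sub, abs_mul, abs_of_pos hn0]
    rw [le_div_iff₀ hn0] at hp'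
    linarith
  have hcast : ((n : ℝ) + Δ) = ((n + Δ : ℕ) : ℝ) := by push_cast; ring
  rw [one_mul, one_mul] at h1
  rw [one_mul] at h2
  have h2' : K / (1 - q) * √(Real.log n) ≤ √n :=
    le_trans (by gcongr; exact le_self_pow₀ hs (by norm_num)) h2
  rw [hcast]
  constructor
  · refine le_trans ?_ (hlow hs hr h1 h3 h4 h5 hrn hm (Nat.le_add_right n Δ) hD hDK' hp'')
    refine mul_le_mul_of_nonneg_right ?_ (Real.exp_pos _).le
    have hs0 : 0 < √(Real.log n) := by linarith
    rw [div_le_div_iff₀ (by positivity) hs0, one_mul, ← mul_assoc]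
    have : 1 ≤ c * max U (1 / c) := by
      calc 1 = c * (1 / c) := by field_simp
        _ ≤ _ := by gcongr; exact le_max_right _ _
    nlinarith
  · refine (binomProb_upper hp0 hq hq1 hK hs hr h1 h2' hrn hm (Nat.le_add_right n Δ)
      hD hDK' hp'').trans ?_
    exact mul_le_mul_of_nonneg_right (le_max_left _ _) (Real.exp_pos _).le
end

section
/- Fix constants 0 < q < p < 1 and K > 0, and set C' := q²/(2p(2−p−q)). There exists M > 0 such that for all sufficiently large n, all integers Δ ≥ 0 with 0 ≤ Δ' ≤ K·√(n·log n), and all real p̃ with |p̃ − p| ≤ K·(log n)/n, the probability p̃₋₊ := P[Bin(n+Δ, q) > Bin(n−1, p̃)] (with the two binomial variables independent) satisfies (1/(M·log n))·exp(−C'·Δ'²/n) ≤ p̃₋₊ ≤ M·(log n)·exp(−C'·Δ'²/n). -/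
/-!
Write `X ~ Bin(n + Δ, q)`, `Y ~ Bin(n - 1, p')` and tilt: reweight the joint law by `exp (t (X - Y))`
with `t = q Δ' / (p (2 - p - q) n)`. The tilted law is again a pair of independent binomials, and
`P[X > Y] = Z · E_tilt[exp (-t (X - Y)); X > Y]`, where `Z` is the moment generating function of
`X - Y` at `t`.

* A third-order Taylor bound for `log (1 - r + r eᵗ)` shows `log Z = -C' Δ'² / n + O(1)`: this `t` is
  the saddle point of the quadratic part, and the errors are `O((log n)³ / √n)`, using
  `Δ' = O(√n log n)` and `|p' - p| n = O(log n)` (`expansion_bounds`).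
* Upper bound: the tilted expectation is at most `1` (`binomProb2_le_mgf`).
* Lower bound: the same expansion shows that the two tilted means differ by `O(√n)`. For `X` within
  one standard scale of its mean (mass at least `3/4` by Chebyshev), each of the
  `L ≈ √n / log n` values of `Y` just below `X` has tilted mass at least `c / √n`
  (`binomPMF_local_lower`), and `exp (-t L)` is bounded below. So the tilted expectation is at least
  a constant times `1 / log n`.

The pointwise bound `c / √n` needs no Stirling formula: neighbouring values of the mass function
within `O(√n)` of the mean have ratio `1 + O(1 / √n)`, so all values in the window are comparable,
and by Chebyshev they carry most of the mass.
-/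

open Finset

/-! ### Moments and local lower bound for one binomial law -/

lemma binomPMF_eq_eval (m : ℕ) (r : ℝ) (k : ℕ) :
    binomPMF m r k = (bernsteinPolynomial ℝ m k).eval r := by
  simp [binomPMF, bernsteinPolynomial]

lemma binomPMF_nonneg_s1 {r : ℝ} (h0 : 0 ≤ r) (h1 : r ≤ 1) (m k : ℕ) : 0 ≤ binomPMF m r k := by
  have : 0 ≤ 1 - r := by linarith
  unfold binomPMF
  positivity

lemma sum_binomPMF (m : ℕ) (r : ℝ) : ∑ k ∈ range (m + 1), binomPMF m r k = 1 := by
  have h := congrArg (Polynomial.eval r) (bernsteinPolynomial.sum ℝ m)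
  rw [Polynomial.eval_finsetSum] at h
  simpa [binomPMF_eq_eval] using h

lemma variance_binomPMF (m : ℕ) (r : ℝ) :
    ∑ k ∈ range (m + 1), ((k : ℝ) - m * r) ^ 2 * binomPMF m r k = m * r * (1 - r) := by
  have h := congrArg (Polynomial.eval r) (bernsteinPolynomial.variance ℝ m)
  rw [Polynomial.eval_finsetSum] at h
  simp only [Polynomial.eval_mul, Polynomial.eval_pow, Polynomial.eval_sub,
    Polynomial.eval_X, Polynomial.eval_natCast, Polynomial.eval_one, nsmul_eq_mul] at h
  rw [← h]
  refine sum_congr rfl fun k _ => ?_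
  rw [binomPMF_eq_eval]
  ring

/-- Chebyshev's inequality: at least `3/4` of the mass of `Bin(m, r)` lies within `√m` of the
mean, because the variance is at most `m / 4`. -/
lemma chebyshev_binomPMF {m : ℕ} (hm : 0 < m) {r : ℝ} (h0 : 0 ≤ r) (h1 : r ≤ 1) :
    3 / 4 ≤
      ∑ k ∈ (range (m + 1)).filter (fun k : ℕ => |(k : ℝ) - m * r| ≤ √m), binomPMF m r k := by
  have hm' : (0 : ℝ) < m := by exact_mod_cast hm
  have hs := sum_filter_add_sum_filter_not (range (m + 1))
    (fun k : ℕ => |(k : ℝ) - m * r| ≤ √m) (binomPMF m r)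
  rw [sum_binomPMF] at hs
  have hout : m *
      ∑ k ∈ (range (m + 1)).filter (fun k : ℕ => ¬ |(k : ℝ) - m * r| ≤ √m), binomPMF m r k
      ≤ m * r * (1 - r) := by
    rw [← variance_binomPMF, mul_sum]
    refine (sum_le_sum fun k hk => ?_).trans (sum_le_sum_of_subset_of_nonneg (filter_subset _ _)
      fun k _ _ => mul_nonneg (sq_nonneg _) (binomPMF_nonneg_s1 h0 h1 m k))
    refine mul_le_mul_of_nonneg_right ?_ (binomPMF_nonneg_s1 h0 h1 m k)
    have hk' := (not_le.1 (mem_filter.1 hk).2).le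
    calc (m : ℝ) = √m ^ 2 := (Real.sq_sqrt hm'.le).symm
      _ ≤ |(k : ℝ) - m * r| ^ 2 := by gcongr
      _ = _ := sq_abs _
  have :
      ∑ k ∈ (range (m + 1)).filter (fun k : ℕ => ¬ |(k : ℝ) - m * r| ≤ √m), binomPMF m r k ≤ 1 / 4 := by
    refine le_of_mul_le_mul_left (hout.trans ?_) hm'
    nlinarith [mul_nonneg hm'.le (sq_nonneg (r - 1 / 2))]
  linarith

/-- Adjacent values of the binomial mass function: `(k+1)(1-r) f(k+1) = (m-k) r f(k)`. -/
lemma binomPMF_succ {m k : ℕ} (hk : k < m) (r : ℝ) :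
    ((k : ℝ) + 1) * (1 - r) * binomPMF m r (k + 1) = ((m : ℝ) - k) * r * binomPMF m r k := by
  obtain ⟨d, rfl⟩ : ∃ d, m = k + 1 + d := ⟨m - (k + 1), by omega⟩
  have hc : ((k + 1 + d).choose (k + 1) : ℝ) * (k + 1) = ((k + 1 + d).choose k : ℝ) * (d + 1) := by
    have := Nat.choose_succ_right_eq (k + 1 + d) k
    rw [show k + 1 + d - k = d + 1 by omega] at this
    exact_mod_cast this
  unfold binomPMF
  rw [show k + 1 + d - (k + 1) = d by omega, show k + 1 + d - k = d + 1 by omega]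
  push_cast
  linear_combination (r ^ (k + 1) * (1 - r) ^ (d + 1)) * hc

/-- Within `A√m` of the mean, neighbouring values of the binomial mass function differ by a factor
at most `exp (4A / (δ²√m))`, for success probabilities in `[δ, 1 - δ]`. The condition
`2A ≤ δ√m` keeps the window inside `[δm/2, (1 - δ/2)m]`. -/
lemma binomPMF_adjacent {δ A : ℝ} (hδ : 0 < δ) (hA : 1 ≤ A) {m : ℕ} {r : ℝ}
    (hr : δ ≤ r) (hr' : δ ≤ 1 - r) (hm : 2 * A ≤ δ * √m) {k : ℕ}
    (hk : |(k : ℝ) - m * r| ≤ A * √m) (hk1 : |((k + 1 : ℕ) : ℝ) - m * r| ≤ A * √m) :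
    binomPMF m r k ≤ Real.exp (4 * A / δ ^ 2 / √m) * binomPMF m r (k + 1) ∧
    binomPMF m r (k + 1) ≤ Real.exp (4 * A / δ ^ 2 / √m) * binomPMF m r k := by
  set s := √(m : ℝ) with hs
  have hss : s ^ 2 = m := Real.sq_sqrt (Nat.cast_nonneg m)
  have hδ1 : δ ≤ 1 / 2 := by linarith
  have hs4 : 1 ≤ s := by nlinarith [Real.sqrt_nonneg (m : ℝ)]
  have hs0 : 0 < s := by linarith
  have hbig : 2 * A * s ≤ δ * m := by rw [← hss]; nlinarith
  have hm0 : (0 : ℝ) < m := by rw [← hss]; positivity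
  rw [abs_le] at hk hk1
  push_cast at hk1
  have hmr : δ * m ≤ m * r := by nlinarith
  have hmr' : δ * m ≤ m * (1 - r) := by nlinarith
  have hk_low : δ * m / 2 ≤ k := by linarith
  have hk_up : δ * m / 2 ≤ m - k := by linarith
  have hkm : k < m := by
    have : (k : ℝ) < m := by nlinarith [mul_pos hδ hm0]
    exact_mod_cast this
  have hrec := binomPMF_succ hkm r
  have hf := binomPMF_nonneg_s1 (by linarith : 0 ≤ r) (by linarith) m k
  have hf' := binomPMF_nonneg_s1 (by linarith : 0 ≤ r) (by linarith) m (k + 1)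
  have hexp : 1 + 4 * A / δ ^ 2 / s ≤ Real.exp (4 * A / δ ^ 2 / s) := by
    linarith [Real.add_one_le_exp (4 * A / δ ^ 2 / s)]
  have hx : δ * m / 2 * δ * (4 * A / δ ^ 2 / s) = 2 * A * s := by
    rw [← hss]; field_simp; ring
  have hx0 : 0 ≤ 4 * A / δ ^ 2 / s := by positivity
  have hAs : 1 ≤ A * s := by nlinarith
  set x := 4 * A / δ ^ 2 / s
  have ha : δ * m / 2 * δ ≤ ((m : ℝ) - k) * r := mul_le_mul hk_up hr hδ.le (by linarith [mul_pos hδ hm0])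
  have hb : δ * m / 2 * δ ≤ ((k : ℝ) + 1) * (1 - r) :=
    mul_le_mul (by linarith) hr' hδ.le (by positivity)
  have hc0 : 0 < δ * m / 2 * δ := by positivity
  constructor
  · refine le_trans ?_ (mul_le_mul_of_nonneg_right hexp hf')
    refine le_of_mul_le_mul_left ?_ (hc0.trans_le ha)
    rw [← hrec, ← mul_assoc]
    refine mul_le_mul_of_nonneg_right ?_ hf'
    have := mul_le_mul_of_nonneg_right ha hx0
    nlinarith
  · refine le_trans ?_ (mul_le_mul_of_nonneg_right hexp hf)
    refine le_of_mul_le_mul_left ?_ (hc0.trans_le hb)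
    rw [hrec, ← mul_assoc]
    refine mul_le_mul_of_nonneg_right ?_ hf
    have := mul_le_mul_of_nonneg_right hb hx0
    nlinarith

/-- Chaining `binomPMF_adjacent` along `d` steps. The window contains at most about `2A√m` steps, so
crossing it costs only a constant factor. -/
lemma binomPMF_chain {δ A : ℝ} (hδ : 0 < δ) (hA : 1 ≤ A) {m : ℕ} {r : ℝ}
    (hr : δ ≤ r) (hr' : δ ≤ 1 - r) (hm : 2 * A ≤ δ * √m) (k d : ℕ)
    (hk : |(k : ℝ) - m * r| ≤ A * √m) (hk1 : |((k + d : ℕ) : ℝ) - m * r| ≤ A * √m) :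
    binomPMF m r k ≤ Real.exp (4 * A / δ ^ 2 / √m * d) * binomPMF m r (k + d) ∧
    binomPMF m r (k + d) ≤ Real.exp (4 * A / δ ^ 2 / √m * d) * binomPMF m r k := by
  induction d with
  | zero => simp
  | succ d ih =>
    have hmid : |((k + d : ℕ) : ℝ) - m * r| ≤ A * √m := by
      rw [abs_le] at *
      push_cast at *
      constructor <;> linarith [(Nat.cast_nonneg d : (0 : ℝ) ≤ d)]
    obtain ⟨h1, h2⟩ := ih hmid
    obtain ⟨h3, h4⟩ := binomPMF_adjacent hδ hA hr hr' hm hmid hk1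
    have he : Real.exp (4 * A / δ ^ 2 / √m * (d + 1 : ℕ)) =
        Real.exp (4 * A / δ ^ 2 / √m * d) * Real.exp (4 * A / δ ^ 2 / √m) := by
      rw [← Real.exp_add]; push_cast; ring_nf
    rw [he, ← add_assoc]
    constructor
    · rw [mul_assoc]
      exact h1.trans (mul_le_mul_of_nonneg_left h3 (Real.exp_pos _).le)
    · rw [mul_comm (Real.exp _), mul_assoc]
      exact h4.trans (mul_le_mul_of_nonneg_left h2 (Real.exp_pos _).le)

/-- Local lower bound: within `A√m` of the mean, every value of the binomial mass function is at
least `c / √m`. A window of `O(√m)` points carries mass `3/4`, so one value has this order, and all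
values in the window are comparable. -/
lemma binomPMF_local_lower {δ A : ℝ} (hδ : 0 < δ) (hA : 1 ≤ A) {m : ℕ} {r : ℝ}
    (hr : δ ≤ r) (hr' : δ ≤ 1 - r) (hm : 2 * A ≤ δ * √m) {k : ℕ}
    (hk : |(k : ℝ) - m * r| ≤ A * √m) :
    k ≤ m ∧ Real.exp (-(8 * A ^ 2 / δ ^ 2)) / 4 / √m ≤ binomPMF m r k := by
  have hss : √(m : ℝ) ^ 2 = m := Real.sq_sqrt (Nat.cast_nonneg m)
  have hs4 : 4 ≤ √(m : ℝ) := by nlinarith [Real.sqrt_nonneg (m : ℝ)]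
  have hm0 : 0 < m := by
    rcases Nat.eq_zero_or_pos m with h | h
    · subst h; norm_num at hs4
    · exact h
  have hcheb := chebyshev_binomPMF hm0 (by linarith : 0 ≤ r) (by linarith)
  have hle : ∀ j ∈ (range (m + 1)).filter (fun j : ℕ => |(j : ℝ) - m * r| ≤ √m),
      binomPMF m r j ≤ Real.exp (8 * A ^ 2 / δ ^ 2) * binomPMF m r k := by
    intro j hj
    have hj1 := (mem_filter.1 hj).2
    have hj' : |(j : ℝ) - m * r| ≤ A * √m := hj1.trans (by nlinarith)
    have key : ∀ d : ℕ, (d : ℝ) ≤ 2 * (A * √m) →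
        Real.exp (4 * A / δ ^ 2 / √m * d) ≤ Real.exp (8 * A ^ 2 / δ ^ 2) := by
      intro d hd
      refine Real.exp_le_exp.2 ?_
      calc 4 * A / δ ^ 2 / √m * d ≤ 4 * A / δ ^ 2 / √m * (2 * (A * √m)) := by gcongr
        _ = _ := by field_simp; ring
    have hf := binomPMF_nonneg_s1 (by linarith : 0 ≤ r) (by linarith) m k
    have a1 := abs_le.1 hj'
    have a2 := abs_le.1 hk
    rcases le_total j k with h | h
    · obtain ⟨d, rfl⟩ := Nat.exists_eq_add_of_le h
      refine (binomPMF_chain hδ hA hr hr' hm j d hj' hk).1.trans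
        (mul_le_mul_of_nonneg_right (key d ?_) hf)
      push_cast at a2
      linarith
    · obtain ⟨d, rfl⟩ := Nat.exists_eq_add_of_le h
      refine (binomPMF_chain hδ hA hr hr' hm k d hk hj').2.trans
        (mul_le_mul_of_nonneg_right (key d ?_) hf)
      push_cast at a1
      linarith
  have hcard : (((range (m + 1)).filter (fun j : ℕ => |(j : ℝ) - m * r| ≤ √m)).card : ℝ)
      ≤ 3 * √m := by
    have hsub : (range (m + 1)).filter (fun j : ℕ => |(j : ℝ) - m * r| ≤ √m) ⊆
        Icc ⌈(m : ℝ) * r - √m⌉₊ ⌊(m : ℝ) * r + √m⌋₊ := by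
      intro j hj
      have := abs_le.1 (mem_filter.1 hj).2
      exact mem_Icc.2 ⟨Nat.ceil_le.2 (by linarith), Nat.le_floor (by linarith)⟩
    have h0 : 0 ≤ (m : ℝ) * r + √m := by
      have : 0 ≤ r := by linarith
      positivity
    have h1 := card_le_card hsub
    rw [Nat.card_Icc] at h1
    have h2 : (((range (m + 1)).filter (fun j : ℕ => |(j : ℝ) - m * r| ≤ √m)).card : ℝ) ≤
        ((⌊(m : ℝ) * r + √m⌋₊ + 1 - ⌈(m : ℝ) * r - √m⌉₊ : ℕ) : ℝ) := by exact_mod_cast h1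
    refine h2.trans ?_
    have h3 := Nat.floor_le h0
    have h4 := Nat.le_ceil ((m : ℝ) * r - √m)
    rcases le_total ⌈(m : ℝ) * r - √m⌉₊ (⌊(m : ℝ) * r + √m⌋₊ + 1) with h | h
    · rw [Nat.cast_sub h]; push_cast; linarith
    · rw [Nat.sub_eq_zero_of_le h]; simp
  have hsum := sum_le_card_nsmul _ _ _ hle
  rw [nsmul_eq_mul] at hsum
  have hf := binomPMF_nonneg_s1 (by linarith : 0 ≤ r) (by linarith) m k
  constructor
  · have hm' : (0 : ℝ) < m := by exact_mod_cast hm0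
    have a2 := abs_le.1 hk
    have : (k : ℝ) ≤ m := by nlinarith
    exact_mod_cast this
  · rw [Real.exp_neg, div_div, div_le_iff₀ (by positivity), inv_le_iff_one_le_mul₀ (Real.exp_pos _)]
    have := mul_le_mul_of_nonneg_right hcard (mul_nonneg (Real.exp_pos (8 * A ^ 2 / δ ^ 2)).le hf)
    nlinarith

/-! ### Exponential tilting of Bernoulli and binomial laws -/

/-- The success probability of the exponentially tilted Bernoulli law: under `Bin(m, r)` reweighted
by `exp (t * k)` and normalised, the trials succeed with probability `tilt r t`. -/
noncomputable def tilt (r t : ℝ) : ℝ := r * Real.exp t / (1 - r + r * Real.exp t)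

lemma mgf_pos {r : ℝ} (h0 : 0 ≤ r) (h1 : r ≤ 1) (t : ℝ) : 0 < 1 - r + r * Real.exp t := by
  have := Real.exp_pos t
  rcases h0.eq_or_lt with h | h
  · rw [← h]; norm_num
  · have := mul_pos h this; linarith

lemma one_sub_tilt {r : ℝ} (h0 : 0 ≤ r) (h1 : r ≤ 1) (t : ℝ) :
    1 - tilt r t = (1 - r) / (1 - r + r * Real.exp t) := by
  have := mgf_pos h0 h1 t
  unfold tilt
  field_simp
  ring

lemma tilt_nonneg {r : ℝ} (h0 : 0 ≤ r) (h1 : r ≤ 1) (t : ℝ) : 0 ≤ tilt r t :=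
  div_nonneg (mul_nonneg h0 (Real.exp_pos t).le) (mgf_pos h0 h1 t).le

lemma tilt_le_one {r : ℝ} (h0 : 0 ≤ r) (h1 : r ≤ 1) (t : ℝ) : tilt r t ≤ 1 := by
  have : 0 ≤ 1 - tilt r t := by
    rw [one_sub_tilt h0 h1]
    exact div_nonneg (by linarith) (mgf_pos h0 h1 t).le
  linarith

/-- Change of measure for one binomial law; the normalising constant is the `m`-th power of the
moment generating function of a single trial. -/
lemma binomPMF_eq_tilt {r : ℝ} (h0 : 0 ≤ r) (h1 : r ≤ 1) (t : ℝ) {m k : ℕ} (hk : k ≤ m) :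
    binomPMF m r k =
      (1 - r + r * Real.exp t) ^ m * Real.exp (-(t * k)) * binomPMF m (tilt r t) k := by
  have hz := mgf_pos h0 h1 t
  unfold binomPMF
  rw [one_sub_tilt h0 h1, tilt, div_pow, div_pow, mul_pow, ← Real.exp_nat_mul, Real.exp_neg,
    mul_comm (k : ℝ) t]
  obtain ⟨d, rfl⟩ := Nat.exists_eq_add_of_le hk
  rw [Nat.add_sub_cancel_left, pow_add]
  have := Real.exp_pos (t * k)
  field_simp

lemma abs_exp_sub_one_sub_le {t : ℝ} (ht : |t| ≤ 1) : |Real.exp t - 1 - t| ≤ t ^ 2 :=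
  Real.abs_exp_sub_one_sub_id_le ht

/-- Second-order expansion of the cumulant generating function of a Bernoulli variable, uniformly
in the success probability. -/
lemma abs_log_mgf_sub_le {r t : ℝ} (h0 : 0 ≤ r) (h1 : r ≤ 1) (ht : |t| ≤ 1 / 4) :
    |Real.log (1 - r + r * Real.exp t) - r * t - r * (1 - r) * t ^ 2 / 2| ≤ 20 * |t| ^ 3 := by
  have ht1 : |t| ≤ 1 := by linarith
  have ht0 := abs_nonneg t
  have e2 := abs_exp_sub_one_sub_le ht1
  have e3 := Real.exp_bound ht1 (n := 3) (by norm_num)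
  norm_num [sum_range_succ, Nat.factorial] at e3
  set E := Real.exp t with hE
  set u := r * (E - 1) with hu
  rw [← sq_abs t] at e2
  have hu1 : |u - r * t| ≤ |t| ^ 2 := by
    rw [show u - r * t = r * (E - 1 - t) by rw [hu]; ring, abs_mul, abs_of_nonneg h0]
    nlinarith [abs_nonneg (E - 1 - t)]
  have hrt : |r * t| ≤ |t| := by rw [abs_mul, abs_of_nonneg h0]; nlinarith
  have hu2 : |u| ≤ 2 * |t| := by
    have := abs_add_le (u - r * t) (r * t)
    rw [sub_add_cancel] at this
    nlinarith
  have hu3 : |u - r * t - r * t ^ 2 / 2| ≤ |t| ^ 3 := by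
    rw [show u - r * t - r * t ^ 2 / 2 = r * (E - (1 + t + t ^ 2 / 2)) by rw [hu]; ring, abs_mul,
      abs_of_nonneg h0]
    have := pow_nonneg ht0 3
    nlinarith [abs_nonneg (E - (1 + t + t ^ 2 / 2))]
  have hsq : |u ^ 2 - (r * t) ^ 2| ≤ 3 * |t| ^ 3 := by
    rw [sq_sub_sq, abs_mul, mul_comm]
    have : |u + r * t| ≤ 3 * |t| := (abs_add_le _ _).trans (by linarith)
    calc _ ≤ |t| ^ 2 * (3 * |t|) := mul_le_mul hu1 this (abs_nonneg _) (by positivity)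
      _ = _ := by ring
  have hlog := Real.abs_log_sub_add_sum_range_le (x := -u) (by rw [abs_neg]; linarith) 2
  norm_num [sum_range_succ] at hlog
  have hlog' : |-u + u ^ 2 / 2 + Real.log (1 + u)| ≤ 16 * |t| ^ 3 := by
    refine hlog.trans ?_
    rw [div_le_iff₀ (by linarith)]
    have : |u| ^ 3 ≤ (2 * |t|) ^ 3 := by gcongr
    have := pow_nonneg ht0 3
    nlinarith
  rw [show 1 - r + r * E = 1 + u by rw [hu]; ring]
  rw [abs_le] at *
  constructor <;> nlinarith [pow_nonneg ht0 3]

/-- First-order expansion of the tilted success probability. -/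
lemma abs_tilt_sub_le {r t : ℝ} (h0 : 0 ≤ r) (h1 : r ≤ 1) (ht : |t| ≤ 1 / 4) :
    |tilt r t - r - r * (1 - r) * t| ≤ 6 * t ^ 2 := by
  have ht0 := abs_nonneg t
  have hz := mgf_pos h0 h1 t
  have e2 := abs_exp_sub_one_sub_le (by linarith : |t| ≤ 1)
  set E := Real.exp t with hE
  have hE1 : |E - 1| ≤ 2 * |t| := by
    have := abs_add_le (E - 1 - t) t
    rw [sub_add_cancel] at this
    rw [← sq_abs t] at e2
    nlinarith
  have hu : |r * (E - 1)| ≤ 2 * |t| := by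
    rw [abs_mul, abs_of_nonneg h0]
    nlinarith [abs_nonneg (E - 1)]
  have hz2 : 1 / 2 ≤ 1 - r + r * E := by
    have := (abs_le.1 hu).1
    linarith
  have hd : tilt r t - r - r * (1 - r) * t =
      r * (1 - r) * ((E - 1 - t) - t * (r * (E - 1))) / (1 - r + r * E) := by
    rw [tilt, ← hE]; field_simp; ring
  have hn : |(E - 1 - t) - t * (r * (E - 1))| ≤ 3 * t ^ 2 := by
    refine (abs_sub _ _).trans ?_
    rw [abs_mul t]
    have : |t| * |r * (E - 1)| ≤ |t| * (2 * |t|) := by gcongr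
    nlinarith [sq_abs t]
  have hrr : |r * (1 - r)| ≤ 1 := by
    rw [abs_of_nonneg (mul_nonneg h0 (by linarith))]; nlinarith
  rw [hd, abs_div, abs_mul, abs_of_pos hz, div_le_iff₀ hz]
  have := mul_le_mul hrr hn (abs_nonneg _) zero_le_one
  nlinarith [sq_nonneg t]

/-! ### Comparison of two independent binomial variables -/

/-- Change of measure for the pair: tilting the first law by `t` and the second by `-t` reweights
the event `k < j` by `exp (-(t * (j - k)))`. -/
lemma binomProb2_eq_tilt {r₁ r₂ : ℝ} (h₁ : 0 ≤ r₁) (h₁' : r₁ ≤ 1) (h₂ : 0 ≤ r₂) (h₂' : r₂ ≤ 1)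
    (t : ℝ) (m₁ m₂ : ℕ) :
    binomProb2 m₁ r₁ m₂ r₂ (fun x y => y < x) =
      ((1 - r₁ + r₁ * Real.exp t) ^ m₁ * (1 - r₂ + r₂ * Real.exp (-t)) ^ m₂) *
      ∑ j ∈ range (m₁ + 1), ∑ k ∈ range (m₂ + 1),
        if k < j then Real.exp (-(t * ((j : ℝ) - k))) *
          (binomPMF m₁ (tilt r₁ t) j * binomPMF m₂ (tilt r₂ (-t)) k) else 0 := by
  unfold binomProb2
  simp only [mul_sum]
  refine sum_congr rfl fun j hj => sum_congr rfl fun k hk => ?_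
  by_cases h : k < j
  · have hj' : j ≤ m₁ := Nat.lt_succ_iff.1 (mem_range.1 hj)
    have hk' : k ≤ m₂ := Nat.lt_succ_iff.1 (mem_range.1 hk)
    rw [Set.indicator_of_mem (by exact h), if_pos h, binomPMF_eq_tilt h₁ h₁' t hj',
      binomPMF_eq_tilt h₂ h₂' (-t) hk',
      show -(t * ((j : ℝ) - k)) = -(t * j) + -(-t * k) by ring, Real.exp_add]
    ring
  · rw [Set.indicator_of_notMem (by exact h), if_neg h, mul_zero]

/-- The Chernoff bound. -/
lemma binomProb2_le_mgf {r₁ r₂ : ℝ} (h₁ : 0 ≤ r₁) (h₁' : r₁ ≤ 1) (h₂ : 0 ≤ r₂) (h₂' : r₂ ≤ 1)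
    {t : ℝ} (ht : 0 ≤ t) (m₁ m₂ : ℕ) :
    binomProb2 m₁ r₁ m₂ r₂ (fun x y => y < x) ≤
      (1 - r₁ + r₁ * Real.exp t) ^ m₁ * (1 - r₂ + r₂ * Real.exp (-t)) ^ m₂ := by
  rw [binomProb2_eq_tilt h₁ h₁' h₂ h₂' t]
  refine mul_le_of_le_one_right (mul_pos (pow_pos (mgf_pos h₁ h₁' t) _)
    (pow_pos (mgf_pos h₂ h₂' (-t)) _)).le ?_
  calc _ ≤ ∑ j ∈ range (m₁ + 1), ∑ k ∈ range (m₂ + 1),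
        binomPMF m₁ (tilt r₁ t) j * binomPMF m₂ (tilt r₂ (-t)) k := by
        refine sum_le_sum fun j _ => sum_le_sum fun k _ => ?_
        have hn := mul_nonneg
          (binomPMF_nonneg_s1 (tilt_nonneg h₁ h₁' t) (tilt_le_one h₁ h₁' t) m₁ j)
          (binomPMF_nonneg_s1 (tilt_nonneg h₂ h₂' (-t)) (tilt_le_one h₂ h₂' (-t)) m₂ k)
        split_ifs with h
        · refine mul_le_of_le_one_left hn (Real.exp_le_one_iff.2 ?_)
          have : (k : ℝ) ≤ j := by exact_mod_cast h.le
          have := mul_nonneg ht (sub_nonneg.2 this)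
          linarith
        · exact hn
    _ = 1 := by
        rw [← sum_mul_sum, sum_binomPMF, sum_binomPMF, one_mul]

/-- Lower bound matching the Chernoff bound: keep only the pairs with `j - L ≤ k < j` and `j` in a
set `W` of tilted mass at least `3/4`, and bound the tilted mass at each such `k` by `b`. -/
lemma mgf_mul_le_binomProb2 {r₁ r₂ : ℝ} (h₁ : 0 ≤ r₁) (h₁' : r₁ ≤ 1) (h₂ : 0 ≤ r₂) (h₂' : r₂ ≤ 1)
    {t : ℝ} (ht : 0 ≤ t) {m₁ m₂ L : ℕ} {b : ℝ} (hb : 0 ≤ b) {W : Finset ℕ}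
    (hW : W ⊆ range (m₁ + 1)) (hmass : 3 / 4 ≤ ∑ j ∈ W, binomPMF m₁ (tilt r₁ t) j)
    (hL : ∀ j ∈ W, L ≤ j)
    (hloc : ∀ j ∈ W, ∀ k, j - L ≤ k → k < j → k ≤ m₂ ∧ b ≤ binomPMF m₂ (tilt r₂ (-t)) k) :
    ((1 - r₁ + r₁ * Real.exp t) ^ m₁ * (1 - r₂ + r₂ * Real.exp (-t)) ^ m₂) *
      (3 / 4 * (L * (Real.exp (-(t * L)) * b))) ≤
    binomProb2 m₁ r₁ m₂ r₂ (fun x y => y < x) := by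
  rw [binomProb2_eq_tilt h₁ h₁' h₂ h₂' t]
  refine mul_le_mul_of_nonneg_left ?_ (mul_pos (pow_pos (mgf_pos h₁ h₁' t) _)
    (pow_pos (mgf_pos h₂ h₂' (-t)) _)).le
  have hf₁ := binomPMF_nonneg_s1 (tilt_nonneg h₁ h₁' t) (tilt_le_one h₁ h₁' t) m₁
  have hf₂ := binomPMF_nonneg_s1 (tilt_nonneg h₂ h₂' (-t)) (tilt_le_one h₂ h₂' (-t)) m₂
  have hterm : ∀ j k : ℕ, 0 ≤ if k < j then Real.exp (-(t * ((j : ℝ) - k))) *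
          (binomPMF m₁ (tilt r₁ t) j * binomPMF m₂ (tilt r₂ (-t)) k) else 0 := by
    intro j k
    split_ifs
    · exact mul_nonneg (Real.exp_pos _).le (mul_nonneg (hf₁ j) (hf₂ k))
    · exact le_rfl
  have hstep : ∀ j ∈ W, binomPMF m₁ (tilt r₁ t) j * (L * (Real.exp (-(t * L)) * b)) ≤
      ∑ k ∈ range (m₂ + 1), if k < j then Real.exp (-(t * ((j : ℝ) - k))) *
          (binomPMF m₁ (tilt r₁ t) j * binomPMF m₂ (tilt r₂ (-t)) k) else 0 := by
    intro j hj
    have hLj := hL j hj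
    have hsub : Ico (j - L) j ⊆ range (m₂ + 1) := by
      intro k hk
      rw [mem_Ico] at hk
      exact mem_range.2 (Nat.lt_succ_of_le (hloc j hj k hk.1 hk.2).1)
    refine le_trans ?_ (sum_le_sum_of_subset_of_nonneg hsub fun k _ _ => hterm j k)
    have hcard : #(Ico (j - L) j) = L := by rw [Nat.card_Ico]; omega
    have := card_nsmul_le_sum (Ico (j - L) j)
      (fun k => if k < j then Real.exp (-(t * ((j : ℝ) - k))) *
          (binomPMF m₁ (tilt r₁ t) j * binomPMF m₂ (tilt r₂ (-t)) k) else 0)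
      (binomPMF m₁ (tilt r₁ t) j * (Real.exp (-(t * L)) * b)) ?_
    · rw [hcard, nsmul_eq_mul] at this
      linarith
    · intro k hk
      rw [mem_Ico] at hk
      rw [if_pos hk.2]
      have hjk : (j : ℝ) - k ≤ L := by
        have : j ≤ k + L := by omega
        have : (j : ℝ) ≤ k + L := by exact_mod_cast this
        linarith
      have hexp : Real.exp (-(t * L)) ≤ Real.exp (-(t * ((j : ℝ) - k))) :=
        Real.exp_le_exp.2 (neg_le_neg (mul_le_mul_of_nonneg_left hjk ht))
      have := mul_le_mul hexp (hloc j hj k hk.1 hk.2).2 hb (Real.exp_pos _).le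
      have := mul_le_mul_of_nonneg_left this (hf₁ j)
      linarith
  refine le_trans ?_ (sum_le_sum_of_subset_of_nonneg hW fun j _ _ =>
    sum_nonneg fun k _ => hterm j k)
  refine le_trans ?_ (sum_le_sum hstep)
  rw [← sum_mul]
  exact mul_le_mul_of_nonneg_right hmass (by positivity)

/-! ### Saddle-point expansion -/


/-- With `t = q D / (p (2 - p - q) n)`, the linear and quadratic terms of the log moment generating
function combine to `-C' D² / n`, and every remaining term is bounded. Similarly the tilted means
agree up to `O(s)`. Here `n = s²`, `ℓ` plays the role of `log n`, `N₁ = n + Δ`, and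
`T = q K / (p (2 - p - q))`, so that `t ≤ T ℓ / s`. -/
lemma expansion_bounds {p q K T n s ℓ D t p' N₁ φ₁ φ₂ ψ₁ ψ₂ : ℝ}
    (hq : 0 < q) (hqp : q < p) (hp : p < 1) (hK : 0 < K)
    (hT : T = q * K / (p * (2 - p - q))) (hn : n = s ^ 2) (hℓ : 1 ≤ ℓ) (hℓs : ℓ ^ 3 ≤ s)
    (hD0 : 0 ≤ D) (hD : D ≤ K * (s * ℓ)) (ht : t = q * D / (p * (2 - p - q) * n))
    (ht4 : t ≤ 1) (hp' : |p' - p| * n ≤ K * ℓ) (hp0 : 0 ≤ p') (hp1 : p' ≤ 1)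
    (hN₁ : N₁ = p / q * n - D) (hN0 : 0 ≤ N₁)
    (hφ₁ : |φ₁ - q * t - q * (1 - q) * t ^ 2 / 2| ≤ 20 * t ^ 3)
    (hφ₂ : |φ₂ - p' * (-t) - p' * (1 - p') * t ^ 2 / 2| ≤ 20 * t ^ 3)
    (hψ₁ : |ψ₁ - q - q * (1 - q) * t| ≤ 6 * t ^ 2)
    (hψ₂ : |ψ₂ - p' - p' * (1 - p') * (-t)| ≤ 6 * t ^ 2) :
    |N₁ * φ₁ + (n - 1) * φ₂ + q ^ 2 / (2 * p * (2 - p - q)) * D ^ 2 / n| ≤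
      K * T + T + K * T ^ 2 + (K + 1) * T + 40 / q * T ^ 3 ∧
    |N₁ * ψ₁ - (n - 1) * ψ₂| ≤ (2 * (K + 1) + K * T + 12 / q * T ^ 2) * s := by
  have hp0' : 0 < p := hq.trans hqp
  have hpq : 0 < 2 - p - q := by linarith
  have hσ : 0 < p * (2 - p - q) := mul_pos hp0' hpq
  have hT0 : 0 < T := by rw [hT]; positivity
  have hℓ0 : 0 < ℓ := by linarith
  have hℓ3 : ℓ ^ 2 ≤ ℓ ^ 3 := pow_le_pow_right₀ hℓ (by norm_num)
  have hℓ2 : ℓ ≤ ℓ ^ 2 := by nlinarith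
  have hs1 : 1 ≤ s := by linarith
  have hs0 : 0 < s := by linarith
  have hn0 : 0 < n := by rw [hn]; positivity
  have hn1 : 1 ≤ n := by rw [hn]; nlinarith
  have ht0 : 0 ≤ t := by rw [ht]; positivity
  have hst : s * t ≤ T * ℓ := by
    rw [ht, hT, hn]
    calc s * (q * D / (p * (2 - p - q) * s ^ 2)) ≤
          s * (q * (K * (s * ℓ)) / (p * (2 - p - q) * s ^ 2)) := by gcongr
      _ = _ := by field_simp
  have htℓ : ℓ ^ 2 * t ≤ T := by
    have h1 : s * (ℓ ^ 2 * t) ≤ s * T := by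
      calc s * (ℓ ^ 2 * t) = ℓ ^ 2 * (s * t) := by ring
        _ ≤ ℓ ^ 2 * (T * ℓ) := by gcongr
        _ = ℓ ^ 3 * T := by ring
        _ ≤ s * T := by gcongr
    exact le_of_mul_le_mul_left h1 hs0
  have htℓ1 : ℓ * t ≤ T := (mul_le_mul_of_nonneg_right hℓ2 ht0).trans htℓ
  have htT : t ≤ T := (le_mul_of_one_le_left ht0 hℓ).trans htℓ1
  have hnt2 : n * t ^ 2 ≤ T ^ 2 * ℓ ^ 2 := by
    calc n * t ^ 2 = (s * t) ^ 2 := by rw [hn]; ring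
      _ ≤ (T * ℓ) ^ 2 := by gcongr
      _ = _ := by ring
  have hnt3 : n * t ^ 3 ≤ T ^ 3 := by
    calc n * t ^ 3 = n * t ^ 2 * t := by ring
      _ ≤ T ^ 2 * ℓ ^ 2 * t := by gcongr
      _ = T ^ 2 * (ℓ ^ 2 * t) := by ring
      _ ≤ T ^ 2 * T := by gcongr
      _ = _ := by ring
  have hDt : D * t ≤ K * T * ℓ ^ 2 := by
    calc D * t ≤ K * (s * ℓ) * t := by gcongr
      _ = K * ℓ * (s * t) := by ring
      _ ≤ K * ℓ * (T * ℓ) := by gcongr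
      _ = _ := by ring
  have hDt2 : D * t ^ 2 ≤ K * T ^ 2 := by
    calc D * t ^ 2 = D * t * t := by ring
      _ ≤ K * T * ℓ ^ 2 * t := by gcongr
      _ = K * T * (ℓ ^ 2 * t) := by ring
      _ ≤ K * T * T := by gcongr
      _ = _ := by ring
  have hN₁n : N₁ ≤ n / q := by
    have : p / q * n ≤ 1 / q * n := by gcongr
    rw [hN₁]; linarith [(by ring : 1 / q * n = n / q)]
  have hnq : n ≤ n / q := by
    rw [le_div_iff₀ hq]
    exact mul_le_of_le_one_right hn0.le (by linarith)
  have hqq : q * (1 - q) ≤ 1 := mul_le_one₀ (by linarith) (by linarith) (by linarith)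
  have hqq0 : 0 ≤ q * (1 - q) := mul_nonneg hq.le (by linarith)
  have hpp0 : 0 ≤ p' * (1 - p') := mul_nonneg hp0 (by linarith)
  have hpp1 : p' * (1 - p') ≤ 1 := mul_le_one₀ hp1 (by linarith) (by linarith)
  have hdiff : |n * (p - p')| ≤ K * ℓ := by
    rw [abs_mul, abs_of_pos hn0, abs_sub_comm, mul_comm]; exact hp'.trans le_rfl
  -- The change of the variance caused by replacing `n, p` by `n - 1, p'`.
  set V := (n - 1) * (p' * (1 - p')) - n * (p * (1 - p)) with hV
  have hVb : |V| ≤ K * ℓ + 1 := by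
    have e : V = n * (p - p') * (p + p' - 1) + -(p' * (1 - p')) := by rw [hV]; ring
    rw [e]
    refine (abs_add_le _ _).trans (add_le_add ?_ ?_)
    · rw [abs_mul]
      have : |p + p' - 1| ≤ 1 := abs_le.2 ⟨by linarith, by linarith⟩
      exact (mul_le_of_le_one_right (abs_nonneg _) this).trans hdiff
    · rw [abs_neg, abs_of_nonneg hpp0]; exact hpp1
  -- The defining property of `t`: it is the saddle point of the quadratic approximation.
  have hsaddle : n * (p * (2 - p - q)) * t = q * D := by
    rw [ht]; field_simp
  constructor
  · set e₁ := φ₁ - q * t - q * (1 - q) * t ^ 2 / 2 with he₁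
    set e₂ := φ₂ - p' * (-t) - p' * (1 - p') * t ^ 2 / 2 with he₂
    have hC : q ^ 2 / (2 * p * (2 - p - q)) * D ^ 2 / n = q * D * t / 2 := by
      rw [ht]; field_simp
    have hN₁q : N₁ * q = p * n - q * D := by rw [hN₁]; field_simp
    have hid : N₁ * φ₁ + (n - 1) * φ₂ + q ^ 2 / (2 * p * (2 - p - q)) * D ^ 2 / n =
        n * (p - p') * t + p' * t + -(q * (1 - q) * (D * t ^ 2) / 2) + V * t ^ 2 / 2
          + (N₁ * e₁ + (n - 1) * e₂) := by
      rw [hC, he₁, he₂, hV]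
      linear_combination (t + (1 - q) * t ^ 2 / 2) * hN₁q + (t / 2) * hsaddle
    have b1 : |n * (p - p') * t| ≤ K * T := by
      rw [abs_mul, abs_of_nonneg ht0]
      calc |n * (p - p')| * t ≤ K * ℓ * t := by gcongr
        _ = K * (ℓ * t) := by ring
        _ ≤ K * T := by gcongr
    have b2 : |p' * t| ≤ T := by
      rw [abs_of_nonneg (mul_nonneg hp0 ht0)]
      exact (mul_le_of_le_one_left ht0 hp1).trans htT
    have b3 : |-(q * (1 - q) * (D * t ^ 2) / 2)| ≤ K * T ^ 2 := by
      have : 0 ≤ D * t ^ 2 := by positivity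
      rw [abs_neg, abs_of_nonneg (by positivity)]
      linarith [mul_le_of_le_one_left this hqq, mul_nonneg hqq0 this]
    have b4 : |V * t ^ 2 / 2| ≤ (K + 1) * T := by
      rw [abs_div, abs_mul, abs_of_nonneg (sq_nonneg t), abs_two]
      have h1 : |V| * t ^ 2 ≤ (K * ℓ + 1) * t ^ 2 := by gcongr
      have h2 : t ^ 2 ≤ t := by
        rw [sq]
        exact mul_le_of_le_one_left ht0 ht4
      have h3 : (K * ℓ + 1) * t ^ 2 ≤ (K * ℓ + 1) * t := by gcongr
      have h4 : K * (ℓ * t) ≤ K * T := by gcongr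
      have h5 : 0 ≤ |V| * t ^ 2 := by positivity
      linarith
    have b5 : |N₁ * e₁ + (n - 1) * e₂| ≤ 40 / q * T ^ 3 := by
      refine (abs_add_le _ _).trans ?_
      rw [abs_mul, abs_mul, abs_of_nonneg hN0, abs_of_nonneg (by linarith : 0 ≤ n - 1)]
      have h1 : N₁ * |e₁| ≤ n / q * (20 * t ^ 3) := by gcongr
      have h2 : (n - 1) * |e₂| ≤ n / q * (20 * t ^ 3) :=
        mul_le_mul (by linarith) hφ₂ (abs_nonneg _) (by positivity)
      calc _ ≤ 40 / q * (n * t ^ 3) := by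
            rw [show 40 / q * (n * t ^ 3) = n / q * (20 * t ^ 3) + n / q * (20 * t ^ 3) by ring]
            linarith
        _ ≤ _ := by gcongr
    rw [hid]
    exact (abs_add_le _ _).trans (add_le_add ((abs_add_le _ _).trans (add_le_add
      ((abs_add_le _ _).trans (add_le_add ((abs_add_le _ _).trans (add_le_add b1 b2)) b3)) b4)) b5)
  · set e₁ := ψ₁ - q - q * (1 - q) * t with he₁
    set e₂ := ψ₂ - p' - p' * (1 - p') * (-t) with he₂
    have hN₁q : N₁ * q = p * n - q * D := by rw [hN₁]; field_simp
    have hid : N₁ * ψ₁ - (n - 1) * ψ₂ =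
        n * (p - p') + p' + -(q * (1 - q) * (D * t)) + V * t + (N₁ * e₁ - (n - 1) * e₂) := by
      rw [he₁, he₂, hV]
      linear_combination (1 + (1 - q) * t) * hN₁q + hsaddle
    have b1 : |n * (p - p') + p'| ≤ K * ℓ + 1 := by
      refine (abs_add_le _ _).trans (add_le_add hdiff ?_)
      rw [abs_of_nonneg hp0]; exact hp1
    have b3 : |-(q * (1 - q) * (D * t))| ≤ K * T * ℓ ^ 2 := by
      have : 0 ≤ D * t := by positivity
      rw [abs_neg, abs_of_nonneg (by positivity)]
      exact (mul_le_of_le_one_left this hqq).trans hDt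
    have b4 : |V * t| ≤ K * ℓ + 1 := by
      rw [abs_mul, abs_of_nonneg ht0]
      exact (mul_le_of_le_one_right (abs_nonneg _) ht4).trans hVb
    have b5 : |N₁ * e₁ - (n - 1) * e₂| ≤ 12 / q * (T ^ 2 * ℓ ^ 2) := by
      refine (abs_sub _ _).trans ?_
      rw [abs_mul, abs_mul, abs_of_nonneg hN0, abs_of_nonneg (by linarith : 0 ≤ n - 1)]
      have h1 : N₁ * |e₁| ≤ n / q * (6 * t ^ 2) := by gcongr
      have h2 : (n - 1) * |e₂| ≤ n / q * (6 * t ^ 2) :=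
        mul_le_mul (by linarith) hψ₂ (abs_nonneg _) (by positivity)
      calc _ ≤ 12 / q * (n * t ^ 2) := by
            rw [show 12 / q * (n * t ^ 2) = n / q * (6 * t ^ 2) + n / q * (6 * t ^ 2) by ring]
            linarith
        _ ≤ _ := by gcongr
    rw [hid]
    refine ((abs_add_le _ _).trans (add_le_add ((abs_add_le _ _).trans (add_le_add
      ((abs_add_le _ _).trans (add_le_add b1 b3)) b4)) b5)).trans ?_
    have hℓ1s : ℓ ≤ s := by linarith
    have hℓ2s : ℓ ^ 2 ≤ s := by linarith
    calc K * ℓ + 1 + K * T * ℓ ^ 2 + (K * ℓ + 1) + 12 / q * (T ^ 2 * ℓ ^ 2)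
        ≤ K * s + s + K * T * s + (K * s + s) + 12 / q * (T ^ 2 * s) := by gcongr
      _ = _ := by ring

/-! ### Two-sided bounds -/

set_option maxHeartbeats 1000000 in
/-- Lemma 2.9 / `lemmaBinomialtail2`.
Fix constants `0 < q < p < 1` and `K > 0`, and set `C' := q²/(2p(2−p−q))`.  There exists `M > 0`
such that for all sufficiently large `n`, all integers `Δ ≥ 0` with `0 ≤ Δ' ≤ K·√(n·log n)`
(where `Δ' = ((p−q)/q)·n − Δ`), and all real `p'` with `|p' − p| ≤ K·(log n)/n`, the probability
`p'₋₊ := P[Bin(n+Δ, q) > Bin(n−1, p')]` (independent binomials) satisfies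
`(1/(M·log n))·exp(−C'·Δ'²/n) ≤ p'₋₊ ≤ M·(log n)·exp(−C'·Δ'²/n)`. -/
theorem binomial_vs_binomial_two_sided_bounds
    (p q K : ℝ) (hq : 0 < q) (hqp : q < p) (hp : p < 1) (hK : 0 < K) :
    ∃ M : ℝ, 0 < M ∧ ∃ N : ℕ, ∀ n : ℕ, N ≤ n → ∀ Δ : ℕ,
      0 ≤ ((p - q) / q) * n - Δ →
      ((p - q) / q) * n - Δ ≤ K * Real.sqrt (n * Real.log n) →
      ∀ p' : ℝ, |p' - p| ≤ K * Real.log n / n →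
        1 / (M * Real.log n) *
            Real.exp (-(q ^ 2 / (2 * p * (2 - p - q))) *
              (((p - q) / q) * n - Δ) ^ 2 / (n : ℝ))
          ≤ binomProb2 (n + Δ) q (n - 1) p' (fun x y => y < x) ∧
        binomProb2 (n + Δ) q (n - 1) p' (fun x y => y < x)
          ≤ M * Real.log n *
            Real.exp (-(q ^ 2 / (2 * p * (2 - p - q))) *
              (((p - q) / q) * n - Δ) ^ 2 / (n : ℝ)) := by
  have hp0 : 0 < p := hq.trans hqp
  have hpq : 0 < 2 - p - q := by linarith
  set C' := q ^ 2 / (2 * p * (2 - p - q)) with hC'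
  set T := q * K / (p * (2 - p - q)) with hT
  have hT0 : 0 < T := by positivity
  set C₀ := K * T + T + K * T ^ 2 + (K + 1) * T + 40 / q * T ^ 3 with hC₀
  set B := 2 * (K + 1) + K * T + 12 / q * T ^ 2 with hB
  have hB0 : 0 < B := by positivity
  set A := 2 * (1 + 1 / q + B) with hA
  have hA1 : 1 ≤ A := by
    have : 0 < 1 / q := by positivity
    linarith
  obtain ⟨δ, hδ, hδp, hδp'⟩ : ∃ δ : ℝ, 0 < δ ∧ 4 * δ ≤ p ∧ 4 * δ ≤ 1 - p :=
    ⟨min p (1 - p) / 4, by have := lt_min hp0 (sub_pos.2 hp); positivity,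
      by linarith [min_le_left p (1 - p)], by linarith [min_le_right p (1 - p)]⟩
  set c := Real.exp (-(8 * A ^ 2 / δ ^ 2)) / 4 with hc
  have hc0 : 0 < c := by positivity
  set c₁ := 3 / 8 * c * Real.exp (-(C₀ + T)) with hc₁
  have hc₁0 : 0 < c₁ := by positivity
  set R := 2 + 4 * T + K / δ + 4 * A / δ with hR
  -- Both requirements on `n` hold eventually; they imply all the smallness conditions below.
  have hev : ∀ᶠ n : ℕ in Filter.atTop, R ≤ Real.log n ∧ Real.log n ^ 3 ≤ √(n : ℝ) := by
    have h1 := (Real.tendsto_log_atTop.comp tendsto_natCast_atTop_atTop).eventually_ge_atTop R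
    have h2 := tendsto_natCast_atTop_atTop.eventually
      ((Real.isLittleO_pow_log_id_atTop (n := 6)).bound one_pos)
    filter_upwards [h1, h2] with n h1 h2
    refine ⟨h1, Real.le_sqrt_of_sq_le ?_⟩
    simp only [id, one_mul, Real.norm_eq_abs, Nat.abs_cast] at h2
    calc (Real.log n ^ 3) ^ 2 = Real.log n ^ 6 := by ring
      _ ≤ _ := (le_abs_self _).trans h2
  obtain ⟨N, hN⟩ := Filter.eventually_atTop.1 hev
  refine ⟨Real.exp C₀ + 1 / c₁, by positivity, N, fun n hn Δ hD0 hD p' hp' => ?_⟩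
  obtain ⟨hRℓ, hℓs⟩ := hN n hn
  set ℓ := Real.log n with hℓ
  set s := √(n : ℝ) with hs
  set D := (p - q) / q * n - Δ with hDdef
  have hns : (n : ℝ) = s ^ 2 := (Real.sq_sqrt (Nat.cast_nonneg n)).symm
  have hTpos : 0 < 4 * T := by positivity
  have hKpos : 0 < K / δ := by positivity
  have hApos : 0 < 4 * A / δ := by positivity
  have hℓ1 : 1 ≤ ℓ := by linarith
  have hℓ0 : 0 < ℓ := by linarith
  have hℓ2s : ℓ ^ 2 ≤ s := (pow_le_pow_right₀ hℓ1 (by norm_num : 2 ≤ 3)).trans hℓs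
  have hℓℓ : ℓ ≤ ℓ ^ 2 := by nlinarith
  have hℓs1 : ℓ ≤ s := hℓℓ.trans hℓ2s
  have hs0 : 0 < s := by linarith
  have hs2 : 2 ≤ s := by linarith
  have hn0 : (0 : ℝ) < n := by rw [hns]; positivity
  have hn2 : 1 ≤ n := by
    have : 0 < n := by exact_mod_cast hn0
    omega
  have hm : ((n - 1 : ℕ) : ℝ) = n - 1 := by rw [Nat.cast_sub hn2, Nat.cast_one]
  have hD' : D ≤ K * (s * ℓ) := by
    refine hD.trans (mul_le_mul_of_nonneg_left ?_ hK.le)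
    rw [Real.sqrt_mul hn0.le]
    refine mul_le_mul_of_nonneg_left ?_ hs0.le
    exact Real.sqrt_le_iff.2 ⟨hℓ0.le, hℓℓ⟩
  set t := q * D / (p * (2 - p - q) * n) with ht
  have ht0 : 0 ≤ t := by positivity
  have htℓ : t * s ≤ T * ℓ := by
    rw [ht, hT, hns]
    calc q * D / (p * (2 - p - q) * s ^ 2) * s ≤
          q * (K * (s * ℓ)) / (p * (2 - p - q) * s ^ 2) * s := by gcongr
      _ = _ := by field_simp
  have ht4 : t ≤ 1 / 4 := by
    have h1 : 4 * T * ℓ ≤ s := by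
      calc 4 * T * ℓ ≤ ℓ * ℓ := by gcongr; linarith
        _ = ℓ ^ 2 := by ring
        _ ≤ s := hℓ2s
    have h2 : t * s ≤ 1 / 4 * s := by linarith
    exact le_of_mul_le_mul_right h2 hs0
  have hp'n : |p' - p| * n ≤ K * ℓ := by rwa [le_div_iff₀ hn0] at hp'
  have hp'δ : |p' - p| ≤ δ := by
    refine le_of_mul_le_mul_right (hp'n.trans ?_) hn0
    have h1 : K ≤ δ * ℓ := by
      have : K / δ ≤ ℓ := by linarith
      rw [div_le_iff₀ hδ] at this; linarith
    calc K * ℓ ≤ δ * ℓ * ℓ := by gcongr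
      _ = δ * ℓ ^ 2 := by ring
      _ ≤ δ * n := by
        rw [hns]
        have : ℓ ^ 2 ≤ s ^ 2 := by gcongr
        gcongr
  have hp'a := abs_le.1 hp'δ
  have hp'0 : 0 ≤ p' := by linarith
  have hp'1 : p' ≤ 1 := by linarith
  have hN₁ : ((n + Δ : ℕ) : ℝ) = p / q * n - D := by
    rw [hDdef]; push_cast; field_simp; ring
  have htabs : |t| ≤ 1 / 4 := by rwa [abs_of_nonneg ht0]
  have htabs' : |-t| ≤ 1 / 4 := by rwa [abs_neg]
  have hφ₁ := abs_log_mgf_sub_le hq.le (hqp.trans hp).le htabs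
  have hφ₂ := abs_log_mgf_sub_le hp'0 hp'1 htabs'
  have hψ₁ := abs_tilt_sub_le hq.le (hqp.trans hp).le htabs
  have hψ₂ := abs_tilt_sub_le hp'0 hp'1 htabs'
  rw [abs_of_nonneg ht0] at hφ₁
  rw [abs_neg, abs_of_nonneg ht0, neg_sq] at hφ₂
  rw [neg_sq] at hψ₂
  obtain ⟨hZ, hmean⟩ := expansion_bounds hq hqp hp hK hT hns hℓ1 hℓs hD0 hD' ht (by linarith)
    hp'n hp'0 hp'1 hN₁ (Nat.cast_nonneg _) hφ₁ hφ₂ hψ₁ hψ₂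
  rw [← hm] at hZ hmean
  rw [← hC', ← hC₀] at hZ
  rw [← hB] at hmean
  have hz₁ := mgf_pos hq.le (hqp.trans hp).le t
  have hz₂ := mgf_pos hp'0 hp'1 (-t)
  set Z := (1 - q + q * Real.exp t) ^ (n + Δ) * (1 - p' + p' * Real.exp (-t)) ^ (n - 1) with hZdef
  have hZexp : Z = Real.exp (((n + Δ : ℕ) : ℝ) * Real.log (1 - q + q * Real.exp t) +
      ((n - 1 : ℕ) : ℝ) * Real.log (1 - p' + p' * Real.exp (-t))) := by
    rw [Real.exp_add, Real.exp_nat_mul, Real.exp_nat_mul, Real.exp_log hz₁, Real.exp_log hz₂]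
  have hexpform : -C' * D ^ 2 / (n : ℝ) = -(C' * D ^ 2 / n) := by ring
  rw [hexpform]
  have hZa := abs_le.1 hZ
  constructor
  · -- The lower bound: `L ≈ s / ℓ` values of the difference, each losing only a factor `exp (-T)`.
    set L := ⌊s / ℓ⌋₊ with hL
    have hsℓ1 : 1 ≤ s / ℓ := by rwa [le_div_iff₀ hℓ0, one_mul]
    have hL_le : (L : ℝ) ≤ s / ℓ := Nat.floor_le (by positivity)
    have hL_ge : s / ℓ / 2 ≤ L := by
      have h1 := Nat.lt_floor_add_one (s / ℓ)
      have h2 : (1 : ℝ) ≤ L := by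
        have : 1 ≤ L := Nat.le_floor (by exact_mod_cast hsℓ1)
        exact_mod_cast this
      rw [← hL] at h1
      linarith
    have hLs : (L : ℝ) ≤ s := hL_le.trans (div_le_self hs0.le hℓ1)
    have htL : t * L ≤ T := by
      calc t * L ≤ t * (s / ℓ) := by gcongr
        _ = t * s / ℓ := by ring
        _ ≤ T := by rwa [div_le_iff₀ hℓ0]
    set w := √((n - 1 : ℕ) : ℝ) with hw
    have hws : w ≤ s := Real.sqrt_le_sqrt (by rw [hm]; linarith)
    have hsw : s ≤ 2 * w := by
      have h1 : 2 ^ 2 ≤ s ^ 2 := pow_le_pow_left₀ (by norm_num) hs2 2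
      have : s / 2 ≤ w := Real.le_sqrt_of_sq_le (by rw [hm, hns, div_pow]; linarith)
      linarith
    have hw0 : 0 < w := by linarith
    have hAw : 2 * A ≤ δ * w := by
      have h1 : 4 * A / δ ≤ s := by linarith
      rw [div_le_iff₀ hδ] at h1
      have h2 := mul_le_mul_of_nonneg_left hsw hδ.le
      linarith
    have hr : δ ≤ tilt p' (-t) := by
      have h1 := Real.add_one_le_exp (-t)
      have h2 : p' * (3 / 4) ≤ p' * Real.exp (-t) := by gcongr; linarith
      have h3 : Real.exp (-t) ≤ 1 := Real.exp_le_one_iff.2 (by linarith)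
      rw [tilt, le_div_iff₀ hz₂]
      have h4 : 1 - p' + p' * Real.exp (-t) ≤ 1 := by
        linarith [mul_le_of_le_one_right hp'0 h3]
      linarith [mul_le_of_le_one_right hδ.le h4]
    have hr' : δ ≤ 1 - tilt p' (-t) := by
      have h3 : Real.exp (-t) ≤ 1 := Real.exp_le_one_iff.2 (by linarith)
      rw [one_sub_tilt hp'0 hp'1, le_div_iff₀ hz₂]
      have h4 : 1 - p' + p' * Real.exp (-t) ≤ 1 := by
        linarith [mul_le_of_le_one_right hp'0 h3]
      linarith [mul_le_of_le_one_right hδ.le h4]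
    set μ₁ := ((n + Δ : ℕ) : ℝ) * tilt q t with hμ₁
    set μ₂ := ((n - 1 : ℕ) : ℝ) * tilt p' (-t) with hμ₂
    have hrootN : √((n + Δ : ℕ) : ℝ) ≤ 1 / q * s := by
      refine Real.sqrt_le_iff.2 ⟨by positivity, ?_⟩
      rw [hN₁, mul_pow, ← hns]
      have h1 : p / q ≤ (1 / q) ^ 2 := by
        rw [div_pow, one_pow, div_le_div_iff₀ hq (by positivity)]
        calc p * q ^ 2 = p * q * q := by ring
          _ ≤ 1 * 1 * q := by gcongr; linarith
          _ = 1 * q := by ring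
      have h2 : p / q * n ≤ (1 / q) ^ 2 * n := by gcongr
      linarith
    have hAs : (1 + 1 / q + B) * s ≤ A * w := by
      have h0 : 0 < 1 + 1 / q + B := by positivity
      calc (1 + 1 / q + B) * s ≤ (1 + 1 / q + B) * (2 * w) := by gcongr
        _ = A * w := by rw [hA]; ring
    have hmean' := abs_le.1 hmean
    set W := (range (n + Δ + 1)).filter (fun j : ℕ => |(j : ℝ) - μ₁| ≤ √((n + Δ : ℕ) : ℝ)) with hW
    have hWj : ∀ j ∈ W, |(j : ℝ) - μ₂| ≤ (1 / q + B) * s := by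
      intro j hj
      have h1 := abs_le.1 ((mem_filter.1 hj).2.trans hrootN)
      exact abs_le.2 ⟨by linarith, by linarith⟩
    have hLj : ∀ j ∈ W, L ≤ j := by
      intro j hj
      have h1 := abs_le.1 (hWj j hj)
      have h2 : A * w ≤ μ₂ := by
        have h3 : ((n - 1 : ℕ) : ℝ) = w ^ 2 := (Real.sq_sqrt (Nat.cast_nonneg _)).symm
        rw [hμ₂, h3]
        calc A * w ≤ δ * w * w := by gcongr; linarith
          _ = w ^ 2 * δ := by ring
          _ ≤ _ := by gcongr
      have : (L : ℝ) ≤ j := by linarith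
      exact_mod_cast this
    have hloc : ∀ j ∈ W, ∀ k, j - L ≤ k → k < j →
        k ≤ n - 1 ∧ c / w ≤ binomPMF (n - 1) (tilt p' (-t)) k := by
      intro j hj k hk1 hk2
      refine binomPMF_local_lower hδ hA1 hr hr' hAw ?_
      have h1 := abs_le.1 (hWj j hj)
      have h2 : (k : ℝ) ≤ j := by exact_mod_cast hk2.le
      have h3 : (j : ℝ) ≤ k + L := by
        have : j ≤ k + L := by omega
        exact_mod_cast this
      exact abs_le.2 ⟨by linarith, by linarith⟩
    have hmass := chebyshev_binomPMF (m := n + Δ) (by omega)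
      (tilt_nonneg hq.le (hqp.trans hp).le t) (tilt_le_one hq.le (hqp.trans hp).le t)
    have hlow := mgf_mul_le_binomProb2 hq.le (hqp.trans hp).le hp'0 hp'1 ht0
      (b := c / w) (by positivity) (filter_subset _ _) hmass hLj hloc
    refine le_trans ?_ hlow
    rw [← hZdef]
    have hZlow : Real.exp (-C₀) * Real.exp (-(C' * D ^ 2 / n)) ≤ Z := by
      rw [hZexp, ← Real.exp_add]
      exact Real.exp_le_exp.2 (by linarith)
    have hLw : 1 / (2 * ℓ) ≤ L * (1 / w) := by
      calc 1 / (2 * ℓ) = s / ℓ / 2 * (1 / s) := by field_simp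
        _ ≤ L * (1 / w) := by gcongr
    have hexpL : Real.exp (-T) ≤ Real.exp (-(t * L)) := Real.exp_le_exp.2 (by linarith)
    have hM : 1 / ((Real.exp C₀ + 1 / c₁) * ℓ) ≤ c₁ / ℓ := by
      rw [div_le_div_iff₀ (by positivity) hℓ0]
      have h1 : c₁ * (1 / c₁) = 1 := mul_one_div_cancel hc₁0.ne'
      have h2 : 0 < c₁ * Real.exp C₀ * ℓ := by positivity
      linear_combination h2.le - ℓ * h1
    calc 1 / ((Real.exp C₀ + 1 / c₁) * ℓ) * Real.exp (-(C' * D ^ 2 / n))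
        ≤ c₁ / ℓ * Real.exp (-(C' * D ^ 2 / n)) := by gcongr
      _ = (Real.exp (-C₀) * Real.exp (-(C' * D ^ 2 / n))) *
            (3 / 4 * (1 / (2 * ℓ) * (Real.exp (-T) * c))) := by
          rw [hc₁, neg_add, Real.exp_add]; field_simp; ring
      _ ≤ Z * (3 / 4 * (L * (1 / w) * (Real.exp (-(t * L)) * c))) := by gcongr
      _ = Z * (3 / 4 * (L * (Real.exp (-(t * L)) * (c / w)))) := by ring
  · refine (binomProb2_le_mgf hq.le (hqp.trans hp).le hp'0 hp'1 ht0 _ _).trans ?_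
    rw [← hZdef]
    have hZup : Z ≤ Real.exp C₀ * Real.exp (-(C' * D ^ 2 / n)) := by
      rw [hZexp, ← Real.exp_add]
      exact Real.exp_le_exp.2 (by linarith)
    refine hZup.trans (mul_le_mul_of_nonneg_right ?_ (Real.exp_pos _).le)
    have h1 : 0 < 1 / c₁ := by positivity
    refine le_trans ?_ (le_mul_of_one_le_right (by positivity) hℓ1)
    linarith
end

section
/- For a, r ∈ (0,1) define the Kullback–Leibler divergence D(a‖r) := a·log(a/r) + (1−a)·log((1−a)/(1−r)). Fix constants 0 < q < p < 1 and K > 0. Then for every ε > 0 there exists N such that for all n ≥ N, all integers Δ ≥ 0 with 0 ≤ Δ' ≤ K·√(n·log n), and all real p̃ with |p̃ − p| ≤ K·(log n)/n, one has |D(n·p̃/(n+Δ) ‖ q) − (q³/(2(1−q)p²))·Δ'²/n²| ≤ ε/n. -/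
/-!
Write `η = √(log n / n)` and `δ = Δ'/n`, so that `0 ≤ δ ≤ Kη` and `|p' - p| ≤ Kη²`. The first
argument of the divergence is `a = p' / (p/q - δ)`, and `a = q + q²δ/p + O(η²)`
(`bern_argument_expansion`). Since `D(q + x ‖ q) = x²/(2q(1-q)) + O(|x|³)` (`klBern_quadratic`),
substituting `x = q²δ/p + O(η²)` gives the claimed main term with error `O(η³)`. Finally
`n η³ = √(log³ n / n) → 0`.
-/

open Finset

/-- Kullback–Leibler divergence between `Bernoulli(a)` and `Bernoulli(r)`. -/
noncomputable def klBern (a r : ℝ) : ℝ :=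
  a * Real.log (a / r) + (1 - a) * Real.log ((1 - a) / (1 - r))

/-- Second-order expansion of one summand of the divergence, with the cubic error uniform in `x`. -/
lemma mul_log_expansion {s x : ℝ} (hs : 0 < s) (hx : |x| ≤ s / 2) :
    |(s + x) * Real.log ((s + x) / s) - (x + x ^ 2 / (2 * s))| ≤ 4 / s ^ 2 * |x| ^ 3 := by
  obtain ⟨u, rfl⟩ : ∃ u, x = s * u := ⟨x / s, by field_simp⟩
  rw [abs_mul, abs_of_pos hs] at hx
  have hu : |u| ≤ 1 / 2 := by nlinarith
  have hdiv : (s + s * u) / s = 1 - -u := by field_simp; ring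
  have hlog := Real.abs_log_sub_add_sum_range_le (x := -u) (by rw [abs_neg]; linarith) 2
  rw [abs_neg] at hlog
  norm_num [Finset.sum_range_succ] at hlog
  rw [hdiv]
  set R := -u + u ^ 2 / 2 + Real.log (1 + u) with hR
  have hlog2 : |R| ≤ 2 * |u| ^ 3 := by
    refine hlog.trans ?_
    rw [div_le_iff₀ (by linarith)]
    nlinarith [pow_nonneg (abs_nonneg u) 3]
  have hL : Real.log (1 - -u) = R + u - u ^ 2 / 2 := by rw [hR, sub_neg_eq_add]; ring
  have heq : (s + s * u) * Real.log (1 - -u) - (s * u + (s * u) ^ 2 / (2 * s))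
      = s * ((1 + u) * R - u ^ 3 / 2) := by
    rw [hL]; field_simp; ring
  have hrhs : 4 / s ^ 2 * |s * u| ^ 3 = s * (4 * |u| ^ 3) := by
    rw [abs_mul, abs_of_pos hs]; field_simp
  rw [heq, hrhs, abs_mul, abs_of_pos hs]
  refine mul_le_mul_of_nonneg_left ?_ hs.le
  have h1 : |1 + u| ≤ 3 / 2 := (abs_add_le 1 u).trans (by rw [abs_one]; linarith)
  calc |(1 + u) * R - u ^ 3 / 2| ≤ |(1 + u) * R| + |u ^ 3 / 2| := abs_sub _ _
    _ = |1 + u| * |R| + |u| ^ 3 / 2 := by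
        rw [abs_mul, abs_div, abs_pow, abs_of_pos (two_pos : (0 : ℝ) < 2)]
    _ ≤ 3 / 2 * (2 * |u| ^ 3) + |u| ^ 3 / 2 := by gcongr
    _ ≤ 4 * |u| ^ 3 := by nlinarith [pow_nonneg (abs_nonneg u) 3]

/-- The divergence near its zero `a = q`: quadratic, with a cubic error. -/
lemma klBern_quadratic {q x : ℝ} (hq : 0 < q) (hq1 : q < 1) (hx : |x| ≤ q / 2)
    (hx' : |x| ≤ (1 - q) / 2) :
    |klBern (q + x) q - x ^ 2 / (2 * q * (1 - q))|
      ≤ (4 / q ^ 2 + 4 / (1 - q) ^ 2) * |x| ^ 3 := by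
  have hr : 0 < 1 - q := by linarith
  have h1 := mul_log_expansion hq hx
  have h2 := mul_log_expansion (x := -x) hr (by rwa [abs_neg])
  rw [abs_neg] at h2
  -- The linear terms `x` and `-x` of the two summands cancel.
  have heq : klBern (q + x) q - x ^ 2 / (2 * q * (1 - q))
      = ((q + x) * Real.log ((q + x) / q) - (x + x ^ 2 / (2 * q)))
        + ((1 - q + -x) * Real.log ((1 - q + -x) / (1 - q))
          - (-x + (-x) ^ 2 / (2 * (1 - q)))) := by
    have h3 : 1 - (q + x) = 1 - q + -x := by ring
    rw [klBern, h3]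
    field_simp
    ring
  have h4 := (abs_add_le _ _).trans (add_le_add h1 h2)
  rwa [← heq, ← add_mul] at h4

/-- First-order expansion in `δ` of the argument `p' / (p/q - δ)`. The hypothesis `1 ≤ p/q - δ`
corresponds to `Δ ≥ 0`. -/
lemma bern_argument_expansion {p q K δ η p' : ℝ} (hq : 0 < q) (hqp : q < p) (hp : p < 1)
    (hδ0 : 0 ≤ δ) (hδ : δ ≤ K * η) (hden : 1 ≤ p / q - δ) (hp' : |p' - p| ≤ K * η ^ 2) :
    |p' / (p / q - δ) - q - q ^ 2 / p * δ| ≤ (K + K ^ 2) * η ^ 2 := by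
  have hp0 : 0 < p := hq.trans hqp
  have hD : 0 < p / q - δ := by linarith
  have hc : q ^ 2 / p ≤ 1 := by rw [div_le_one hp0]; nlinarith
  have heq : p' / (p / q - δ) - q - q ^ 2 / p * δ
      = ((p' - p) + q ^ 2 / p * δ ^ 2) / (p / q - δ) := by
    rw [eq_div_iff hD.ne', sub_mul, sub_mul, div_mul_cancel₀ _ hD.ne']
    field_simp
    ring
  rw [heq, abs_div, abs_of_pos hD]
  refine (div_le_self (abs_nonneg _) hden).trans ((abs_add_le _ _).trans ?_)
  have h2 : |q ^ 2 / p * δ ^ 2| ≤ (K * η) ^ 2 := by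
    rw [abs_of_nonneg (by positivity)]
    calc q ^ 2 / p * δ ^ 2 ≤ 1 * (K * η) ^ 2 := by gcongr
      _ = _ := one_mul _
  linarith [mul_pow K η 2]

/-- The full estimate in terms of the small parameter `η`, with an error of order `η³`. -/
lemma klBern_cubic_error {p q K δ η p' : ℝ} (hq : 0 < q) (hqp : q < p) (hp : p < 1) (hK : 0 < K)
    (hη : 0 ≤ η) (hη1 : η ≤ 1) (hηq : (2 * K + K ^ 2) * η ≤ q / 2)
    (hηr : (2 * K + K ^ 2) * η ≤ (1 - q) / 2)
    (hδ0 : 0 ≤ δ) (hδ : δ ≤ K * η) (hden : 1 ≤ p / q - δ) (hp' : |p' - p| ≤ K * η ^ 2) :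
    |klBern (p' / (p / q - δ)) q - q ^ 3 / (2 * (1 - q) * p ^ 2) * δ ^ 2|
      ≤ ((4 / q ^ 2 + 4 / (1 - q) ^ 2) * (2 * K + K ^ 2) ^ 3
          + 2 * (2 * K + K ^ 2) ^ 2 / (2 * q * (1 - q))) * η ^ 3 := by
  have hp0 : 0 < p := hq.trans hqp
  have hr : 0 < 1 - q := by linarith
  set M := 2 * K + K ^ 2 with hM
  have hM0 : 0 < M := by positivity
  have hexp := bern_argument_expansion hq hqp hp hδ0 hδ hden hp'
  set x := p' / (p / q - δ) - q with hx
  set y := q ^ 2 / p * δ with hy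
  have hc : q ^ 2 / p ≤ 1 := by rw [div_le_one hp0]; nlinarith
  have hy0 : 0 ≤ y := by positivity
  have hyK : y ≤ K * η := by
    calc y ≤ 1 * (K * η) := by rw [hy]; gcongr
      _ = _ := one_mul _
  have hsq : η ^ 2 ≤ η := by nlinarith
  have hyM : |y| ≤ M * η := by
    rw [abs_of_nonneg hy0]
    nlinarith [mul_nonneg (add_pos hK (pow_pos hK 2)).le hη]
  have hxM : |x| ≤ M * η := by
    have h1 : |x| ≤ |x - y| + |y| := by simpa using abs_add_le (x - y) y
    rw [abs_of_nonneg hy0] at h1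
    have h2 : (K + K ^ 2) * η ^ 2 ≤ (K + K ^ 2) * η := by gcongr
    rw [hM]; linarith
  have hquad := klBern_quadratic hq (hqp.trans hp) (hxM.trans hηq) (hxM.trans hηr)
  have hqx : q + x = p' / (p / q - δ) := by rw [hx]; ring
  rw [hqx] at hquad
  have hmain : q ^ 3 / (2 * (1 - q) * p ^ 2) * δ ^ 2 = y ^ 2 / (2 * q * (1 - q)) := by
    rw [hy]; field_simp
  have hdiff : |x ^ 2 - y ^ 2| ≤ 2 * M ^ 2 * η ^ 3 := by
    have h1 : |x - y| ≤ M * η ^ 2 := hexp.trans (by gcongr; rw [hM]; linarith)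
    have h2 : |x + y| ≤ 2 * (M * η) := (abs_add_le x y).trans (by linarith)
    calc |x ^ 2 - y ^ 2| = |x + y| * |x - y| := by rw [← abs_mul]; ring_nf
      _ ≤ 2 * (M * η) * (M * η ^ 2) := by gcongr
      _ = _ := by ring
  rw [hmain]
  have hdiff2 : |x ^ 2 / (2 * q * (1 - q)) - y ^ 2 / (2 * q * (1 - q))|
      ≤ 2 * M ^ 2 / (2 * q * (1 - q)) * η ^ 3 := by
    have h0 : 0 < 2 * q * (1 - q) := by positivity
    rw [← sub_div, abs_div, abs_of_pos h0, div_mul_eq_mul_div]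
    gcongr
  calc _ ≤ _ + _ := abs_sub_le _ (x ^ 2 / (2 * q * (1 - q))) _
    _ ≤ (4 / q ^ 2 + 4 / (1 - q) ^ 2) * (M * η) ^ 3
          + 2 * M ^ 2 / (2 * q * (1 - q)) * η ^ 3 := by
        refine add_le_add (hquad.trans ?_) hdiff2
        gcongr
    _ = _ := by ring

open Filter Topology in
lemma tendsto_sqrt_log_pow_div (k : ℕ) :
    Tendsto (fun n : ℕ => √(Real.log n ^ k / n)) atTop (𝓝 0) := by
  have h := (Real.tendsto_pow_log_div_mul_add_atTop 1 0 k one_ne_zero).comp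
    (tendsto_natCast_atTop_atTop (R := ℝ))
  have h2 := (Real.continuous_sqrt.tendsto 0).comp h
  rw [Real.sqrt_zero] at h2
  refine h2.congr fun n => ?_
  simp

/-- KL-divergence asymptotics in the proof of Lemma 2.8.
Fix constants `0 < q < p < 1` and `K > 0`.  Then for every `ε > 0` there exists `N` such that
for all `n ≥ N`, all integers `Δ ≥ 0` with `0 ≤ Δ' ≤ K·√(n·log n)` (where
`Δ' = ((p−q)/q)·n − Δ`), and all real `p'` with `|p' − p| ≤ K·(log n)/n`, one has
`|D(n·p'/(n+Δ) ‖ q) − (q³/(2(1−q)p²))·Δ'²/n²| ≤ ε/n`. -/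
theorem klBern_asymptotics
    (p q K : ℝ) (hq : 0 < q) (hqp : q < p) (hp : p < 1) (hK : 0 < K) :
    ∀ ε : ℝ, 0 < ε → ∃ N : ℕ, ∀ n : ℕ, N ≤ n → ∀ Δ : ℕ,
      0 ≤ ((p - q) / q) * n - Δ →
      ((p - q) / q) * n - Δ ≤ K * Real.sqrt (n * Real.log n) →
      ∀ p' : ℝ, |p' - p| ≤ K * Real.log n / n →
        |klBern ((n : ℝ) * p' / ((n : ℝ) + Δ)) q -
            q ^ 3 / (2 * (1 - q) * p ^ 2) * (((p - q) / q) * n - Δ) ^ 2 / (n : ℝ) ^ 2|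
          ≤ ε / n := by
  intro ε hε
  have hr : 0 < 1 - q := by linarith
  set M := 2 * K + K ^ 2 with hM
  have hM0 : 0 < M := by positivity
  set C := (4 / q ^ 2 + 4 / (1 - q) ^ 2) * M ^ 3 + 2 * M ^ 2 / (2 * q * (1 - q)) with hC
  have hC0 : 0 < C := by positivity
  have hsmall : ∀ c : ℝ, 0 < c → ∀ᶠ n : ℕ in Filter.atTop, √(Real.log n ^ 1 / n) < c :=
    fun c hc => (tendsto_sqrt_log_pow_div 1).eventually_lt_const hc
  have hcube : ∀ᶠ n : ℕ in Filter.atTop, √(Real.log n ^ 3 / n) < ε / C :=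
    (tendsto_sqrt_log_pow_div 3).eventually_lt_const (by positivity)
  obtain ⟨N, hN⟩ := Filter.eventually_atTop.1
    ((((hsmall 1 one_pos).and (hsmall (q / 2 / M) (by positivity))).and
      (hsmall ((1 - q) / 2 / M) (by positivity))).and
        (hcube.and (Filter.eventually_ge_atTop 1)))
  refine ⟨N, fun n hn Δ hΔ0 hΔ p' hp' => ?_⟩
  obtain ⟨⟨⟨h1, h2⟩, h3⟩, h4, hn1⟩ := hN n hn
  rw [pow_one] at h1 h2 h3
  have hn0 : (0 : ℝ) < n := by exact_mod_cast hn1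
  have hL : 0 ≤ Real.log n := Real.log_natCast_nonneg n
  set η := √(Real.log n / n) with hηdef
  have hη2 : η ^ 2 = Real.log n / n := Real.sq_sqrt (by positivity)
  have hη0 : 0 ≤ η := Real.sqrt_nonneg _
  rw [lt_div_iff₀ hM0] at h2 h3
  set δ := ((p - q) / q * n - Δ) / n with hδdef
  have hsqrt : √(n * Real.log n) = n * η := by
    rw [← Real.sqrt_sq hn0.le, hηdef, ← Real.sqrt_mul (by positivity), Real.sqrt_sq hn0.le]
    congr 1
    field_simp
  have hcub : n * η ^ 3 = √(Real.log n ^ 3 / n) := by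
    rw [eq_comm, Real.sqrt_eq_iff_mul_self_eq (by positivity) (by positivity), eq_comm]
    calc n * η ^ 3 * (n * η ^ 3) = n ^ 2 * (η ^ 2) ^ 3 := by ring
      _ = _ := by rw [hη2]; field_simp
  -- Since `Δ ≥ 0`, this quotient is at least one, so dividing by it does not enlarge errors.
  have hpδ : p / q - δ = (n + Δ) / n := by
    rw [hδdef]; field_simp; ring
  have hden : 1 ≤ p / q - δ := by
    rw [hpδ, one_le_div hn0]
    linarith [Nat.cast_nonneg (α := ℝ) Δ]
  have hδ : δ ≤ K * η := by
    rw [hδdef, div_le_iff₀ hn0]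
    rw [hsqrt] at hΔ
    linarith
  have key := klBern_cubic_error hq hqp hp hK hη0 h1.le (by linarith) (by linarith)
    (div_nonneg hΔ0 hn0.le) hδ hden (by rwa [hη2, ← mul_div_assoc])
  have harg : p' / (p / q - δ) = n * p' / (n + Δ) := by
    rw [hpδ]; field_simp
  rw [harg, div_pow, ← mul_div_assoc] at key
  refine key.trans ?_
  rw [← hM, ← hC, le_div_iff₀ hn0]
  rw [← hcub, lt_div_iff₀ hC0] at h4
  linarith
end

section
/- Fix constants 0 < q < p < 1, δ > 0 and K > 0, and set C' := q²/(2p(2−p−q)). There exists M > 0 such that for all sufficiently large n, all integers Δ ≥ 0 with δ·√(n·log n) ≤ Δ' ≤ K·√(n·log n), and all real p̃ with |p̃ − p| ≤ K·(log n)/n, the minimum over integers K₀ in the (nonempty) interval [(n+Δ)q, n·p̃] of the quantity q(n+Δ)(K₀ − (n+Δ)q)²/(2(1−q)K₀²) + (1−p̃)·n·(n − K₀ − n(1−p̃))²/(2p̃(n−K₀)²) differs from C'·Δ'²/n by at most M. -/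
/-!
Put `D = qΔ'`, `e = n(p' - p)` and, for a point `x` of the interval, `a = x - (n+Δ)q ≥ 0` and
`b = np' - x ≥ 0`. Since `(n+Δ)q = pn - D`, the sum `a + b = D + e =: T` does not depend on `x`.

With `s = √(n log n)` one has `D, T = O(s)` and `e = O(log n)`, so `x` is within `O(s)` of `pn`.
Replacing both coefficients of the cost by their values at `x = pn`, `p' = p` therefore costs
`O(s/n²)` in each coefficient, hence `O(s³/n²) = O(1)` in total (`abs_tiltCost_sub_le`). What
remains is to minimize `a²/A + b²/B` subject to `a + b = T`, with `A = 2(1-q)pn` and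
`B = 2p(1-p)n`. The real minimum is `T²/(A+B)`, and an integer point within distance `1` of the
real minimizer exceeds it by at most `1/A + 1/B`. Finally
`T² - D² = 2De + e² = O(s log n) = O(n)`, so `T²/(A+B)` differs from `D²/(A+B) = C'Δ'²/n` by `O(1)`.
-/


open Finset

/-- The large-deviation cost functional appearing in the proof of Lemma 2.9. -/
noncomputable def tiltCost (q p' : ℝ) (n Δ : ℕ) (x : ℝ) : ℝ :=
  q * ((n : ℝ) + Δ) * (x - ((n : ℝ) + Δ) * q) ^ 2 / (2 * (1 - q) * x ^ 2) +
  (1 - p') * (n : ℝ) * ((n : ℝ) - x - (n : ℝ) * (1 - p')) ^ 2 / (2 * p' * ((n : ℝ) - x) ^ 2)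

/-! ### Freezing the coefficients of the cost -/

/-- If `N` and `X` are both within `u` of `P`, and `u` is at most `P / 2`, then `N / X²` is close
to `1 / P`. -/
lemma abs_div_sq_sub_inv_le {P N X u : ℝ} (hP : 0 < P) (hu : u ≤ P / 2)
    (hN : |N - P| ≤ u) (hX : |X - P| ≤ u) : |N / X ^ 2 - 1 / P| ≤ 14 * u / P ^ 2 := by
  have hu0 : 0 ≤ u := (abs_nonneg _).trans hN
  have hX1 := abs_le.1 hX
  have hXl : P / 2 ≤ X := by linarith
  have hXpos : 0 < X := by linarith
  have hnum : |N * P - X ^ 2| ≤ 7 / 2 * u * P := by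
    have h : N * P - X ^ 2 = (N - P) * P - (X - P) * (X + P) := by ring
    rw [h]
    calc |(N - P) * P - (X - P) * (X + P)|
        ≤ |(N - P) * P| + |(X - P) * (X + P)| := abs_sub _ _
      _ = |N - P| * P + |X - P| * (X + P) := by
          rw [abs_mul, abs_mul, abs_of_pos hP, abs_of_pos (by linarith : 0 < X + P)]
      _ ≤ u * P + u * (5 / 2 * P) := by
          gcongr
          linarith
      _ = 7 / 2 * u * P := by ring
  have hden : P ^ 3 / 4 ≤ X ^ 2 * P := by
    have : (P / 2) ^ 2 ≤ X ^ 2 := by gcongr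
    nlinarith
  have heq : N / X ^ 2 - 1 / P = (N * P - X ^ 2) / (X ^ 2 * P) := by
    field_simp
  rw [heq, abs_div, abs_of_pos (by positivity : 0 < X ^ 2 * P)]
  calc |N * P - X ^ 2| / (X ^ 2 * P) ≤ (7 / 2 * u * P) / (P ^ 3 / 4) := by gcongr
    _ = 14 * u / P ^ 2 := by field_simp; ring

/-- Freezing the coefficients of the cost at `x = pn`, `p' = p` changes it by a bounded amount:
the relative error `O(s/n)` acts on a quantity of size `O(s²/n)`, and `s³ ≤ n²`. -/
lemma abs_tiltCost_sub_le {p q C s p' x : ℝ} {n Δ : ℕ} (hq : 0 < q) (hqp : q < p) (hp : p < 1)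
    (hC : 0 < C) (hs : 0 < s) (hn : (0 : ℝ) < n) (hs3 : s ^ 3 ≤ (n : ℝ) ^ 2)
    (hsp : C * s ≤ p * n / 2) (hsr : C * s ≤ (1 - p) * n / 2)
    (hN : |((n : ℝ) + Δ) * q - p * n| ≤ C * s) (hp' : n * |p' - p| ≤ p / 2 * (C * s))
    (hx : |x - p * n| ≤ C * s)
    (ha : 0 ≤ x - ((n : ℝ) + Δ) * q) (ha' : x - ((n : ℝ) + Δ) * q ≤ C * s)
    (hb : 0 ≤ n * p' - x) (hb' : n * p' - x ≤ C * s) :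
    |tiltCost q p' n Δ x - ((x - ((n : ℝ) + Δ) * q) ^ 2 / (2 * (1 - q) * p * n)
        + (n * p' - x) ^ 2 / (2 * p * (1 - p) * n))|
      ≤ 7 * C ^ 3 / ((1 - q) * p ^ 2) + 7 * C ^ 3 / (p * (1 - p) ^ 2) := by
  have hp0 : 0 < p := hq.trans hqp
  have hr : 0 < 1 - p := by linarith
  have hr' : 0 < 1 - q := by linarith
  -- `p' ≥ p / 2`, because `C s ≤ n`
  have hp'2 : p / 2 ≤ p' := by
    have h1 : n * |p' - p| ≤ n * (p / 2) := by nlinarith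
    have h2 := abs_le.1 (le_of_mul_le_mul_left h1 hn)
    linarith
  have hp'0 : 0 < p' := by linarith
  have e1 := abs_div_sq_sub_inv_le (by positivity : 0 < p * n) hsp hN hx
  -- the factor `1 / p'` is traded for `1 / p` by a modified numerator
  have hN2 : |(1 - p') * n * p / p' - (1 - p) * n| ≤ C * s := by
    have h : (1 - p') * n * p / p' - (1 - p) * n = n * (p - p') / p' := by
      field_simp; ring
    rw [h, abs_div, abs_mul, abs_of_pos hp'0, abs_of_pos hn, abs_sub_comm, div_le_iff₀ hp'0]
    have : 0 < C * s := by positivity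
    nlinarith
  have hX2 : |((n : ℝ) - x) - (1 - p) * n| ≤ C * s := by
    rw [show ((n : ℝ) - x) - (1 - p) * n = -(x - p * n) by ring, abs_neg]
    exact hx
  have e2 := abs_div_sq_sub_inv_le (by positivity : 0 < (1 - p) * n) hsr hN2 hX2
  -- a coefficient error `O(s/n²)` times the square of a quantity `O(s)`
  have key : ∀ c w E : ℝ, 0 < c → 0 ≤ w → w ≤ C * s → |E| ≤ 14 * (C * s) / (c * n) ^ 2 →
      |E| * w ^ 2 ≤ 14 * C ^ 3 / c ^ 2 := by
    intro c w E hc hw hw' hE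
    calc |E| * w ^ 2 ≤ 14 * (C * s) / (c * n) ^ 2 * (C * s) ^ 2 := by gcongr
      _ = 14 * C ^ 3 / c ^ 2 * (s ^ 3 / (n : ℝ) ^ 2) := by field_simp
      _ ≤ 14 * C ^ 3 / c ^ 2 * 1 := by
          gcongr
          exact (div_le_one (by positivity)).2 hs3
      _ = _ := mul_one _
  have k1 := key p _ _ hp0 ha ha' e1
  have k2 := key (1 - p) _ _ hr hb hb' e2
  set E1 := ((n : ℝ) + Δ) * q / x ^ 2 - 1 / (p * n) with hE1
  set E2 := (1 - p') * n * p / p' / ((n : ℝ) - x) ^ 2 - 1 / ((1 - p) * n) with hE2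
  have hxpos : 0 < x := by have := abs_le.1 hx; nlinarith
  have hXpos : 0 < (n : ℝ) - x := by have := abs_le.1 hX2; nlinarith
  have hsplit : tiltCost q p' n Δ x - ((x - ((n : ℝ) + Δ) * q) ^ 2 / (2 * (1 - q) * p * n)
        + (n * p' - x) ^ 2 / (2 * p * (1 - p) * n))
      = E1 * (x - ((n : ℝ) + Δ) * q) ^ 2 / (2 * (1 - q)) + E2 * (n * p' - x) ^ 2 / (2 * p) := by
    have t1 : q * ((n : ℝ) + Δ) * (x - ((n : ℝ) + Δ) * q) ^ 2 / (2 * (1 - q) * x ^ 2)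
        - (x - ((n : ℝ) + Δ) * q) ^ 2 / (2 * (1 - q) * p * n)
        = E1 * (x - ((n : ℝ) + Δ) * q) ^ 2 / (2 * (1 - q)) := by
      rw [hE1]; field_simp
    have t2 : (1 - p') * (n : ℝ) * ((n : ℝ) - x - (n : ℝ) * (1 - p')) ^ 2
          / (2 * p' * ((n : ℝ) - x) ^ 2) - (n * p' - x) ^ 2 / (2 * p * (1 - p) * n)
        = E2 * (n * p' - x) ^ 2 / (2 * p) := by
      rw [hE2, show (n : ℝ) - x - (n : ℝ) * (1 - p') = n * p' - x by ring]; field_simp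
    rw [tiltCost, ← t1, ← t2]; ring
  rw [hsplit]
  refine (abs_add_le _ _).trans (add_le_add ?_ ?_)
  · rw [abs_div, abs_mul, abs_of_nonneg (sq_nonneg (x - ((n : ℝ) + Δ) * q)),
      abs_of_pos (by positivity : 0 < 2 * (1 - q))]
    calc _ ≤ 14 * C ^ 3 / p ^ 2 / (2 * (1 - q)) := by gcongr
      _ = _ := by field_simp; ring
  · rw [abs_div, abs_mul, abs_of_nonneg (sq_nonneg (n * p' - x)),
      abs_of_pos (by positivity : 0 < 2 * p)]
    calc _ ≤ 14 * C ^ 3 / (1 - p) ^ 2 / (2 * p) := by gcongr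
      _ = _ := by field_simp; ring

/-! ### Growth of `√(n log n)` -/

/-- The size relations between `n`, `L = log n` and `s = √(nL)` all follow from the single
condition `L³ ≤ η²n` once `L ≥ 1`. -/
lemma eventually_sqrt_log_bounds {η : ℝ} (hη : 0 < η) :
    ∃ N : ℕ, ∀ n : ℕ, N ≤ n → (0 : ℝ) < n ∧ 1 ≤ Real.log n ∧
      Real.log n ≤ η * √(n * Real.log n) ∧ √(n * Real.log n) ≤ η * n ∧
      √(n * Real.log n) * Real.log n ≤ η * n ∧ √(n * Real.log n) ^ 3 ≤ η * (n : ℝ) ^ 2 := by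
  have h1 : ∀ᶠ x : ℝ in Filter.atTop, Real.log x ^ 3 ≤ η ^ 2 * x := by
    have := (Real.isLittleO_pow_log_id_atTop (n := 3)).bound (by positivity : 0 < η ^ 2)
    filter_upwards [this, Filter.eventually_ge_atTop 0] with x hx hx0
    have h2 := (Real.norm_eq_abs _ ▸ le_abs_self (Real.log x ^ 3)).trans hx
    simpa [abs_of_nonneg hx0] using h2
  have h2 : ∀ᶠ x : ℝ in Filter.atTop, 1 ≤ Real.log x :=
    Real.tendsto_log_atTop.eventually_ge_atTop 1
  have h3 := tendsto_natCast_atTop_atTop (R := ℝ) |>.eventually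
    ((h1.and h2).and (Filter.eventually_gt_atTop 0))
  obtain ⟨N, hN⟩ := Filter.eventually_atTop.1 h3
  refine ⟨N, fun n hn => ?_⟩
  obtain ⟨⟨hL3, hL⟩, hn0⟩ := hN n hn
  set L := Real.log n
  have hL0 : 0 < L := by linarith
  have hss : √(n * L) ^ 2 = n * L := Real.sq_sqrt (by positivity)
  have hs : 0 < √(n * L) := Real.sqrt_pos.2 (by positivity)
  set s := √(n * L)
  have hL1 : L ≤ η ^ 2 * n := le_trans (le_self_pow₀ hL (by norm_num)) hL3
  refine ⟨hn0, hL, ?_, ?_, ?_, ?_⟩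
  · refine (sq_le_sq₀ (by positivity) (by positivity)).1 ?_
    calc L ^ 2 = L * L := sq L
      _ ≤ η ^ 2 * n * L := by gcongr
      _ = (η * s) ^ 2 := by rw [mul_pow, hss]; ring
  · refine (sq_le_sq₀ (by positivity) (by positivity)).1 ?_
    calc s ^ 2 = n * L := hss
      _ ≤ n * (η ^ 2 * n) := by gcongr
      _ = (η * n) ^ 2 := by ring
  · refine (sq_le_sq₀ (by positivity) (by positivity)).1 ?_
    calc (s * L) ^ 2 = n * L ^ 3 := by rw [mul_pow, hss]; ring
      _ ≤ n * (η ^ 2 * n) := by gcongr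
      _ = (η * n) ^ 2 := by ring
  · refine (sq_le_sq₀ (by positivity) (by positivity)).1 ?_
    calc (s ^ 3) ^ 2 = (s ^ 2) ^ 3 := by ring
      _ = n ^ 3 * L ^ 3 := by rw [hss]; ring
      _ ≤ n ^ 3 * (η ^ 2 * n) := by gcongr
      _ = (η * n ^ 2) ^ 2 := by ring

/-! ### Minimization of the quadratic model -/

/-- `a²/A + b²/B` exceeds its minimum on the line `a + b = T` by an explicit square. -/
lemma sq_div_add_sq_div {A B a b : ℝ} (hA : 0 < A) (hB : 0 < B) :
    a ^ 2 / A + b ^ 2 / B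
      = (a + b) ^ 2 / (A + B) + (a - A / (A + B) * (a + b)) ^ 2 * (1 / A + 1 / B) := by
  field_simp; ring

/-- the minimization problem in the proof of Lemma 2.9.
Fix constants `0 < q < p < 1`, `δ > 0` and `K > 0`, and set `C' := q²/(2p(2−p−q))`.  There
exists `M > 0` such that for all sufficiently large `n`, all integers `Δ ≥ 0` with
`δ·√(n·log n) ≤ Δ' ≤ K·√(n·log n)` (where `Δ' = ((p−q)/q)·n − Δ`), and all real `p'` with
`|p' − p| ≤ K·(log n)/n`:  the minimum over integers `K₀` in the (nonempty) interval
`[(n+Δ)q, n·p']` of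
`q(n+Δ)(K₀ − (n+Δ)q)²/(2(1−q)K₀²) + (1−p')·n·(n − K₀ − n(1−p'))²/(2p'(n−K₀)²)`
differs from `C'·Δ'²/n` by at most `M`. -/
theorem tiltCost_min_asymptotics
    (p q δ K : ℝ) (hq : 0 < q) (hqp : q < p) (hp : p < 1) (hδ : 0 < δ) (hK : 0 < K) :
    ∃ M : ℝ, 0 < M ∧ ∃ N : ℕ, ∀ n : ℕ, N ≤ n → ∀ Δ : ℕ,
      δ * Real.sqrt (n * Real.log n) ≤ ((p - q) / q) * n - Δ →
      ((p - q) / q) * n - Δ ≤ K * Real.sqrt (n * Real.log n) →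
      ∀ p' : ℝ, |p' - p| ≤ K * Real.log n / n →
        ∃ K₀ : ℤ, ((n : ℝ) + Δ) * q ≤ (K₀ : ℝ) ∧ (K₀ : ℝ) ≤ (n : ℝ) * p' ∧
          (∀ K₁ : ℤ, ((n : ℝ) + Δ) * q ≤ (K₁ : ℝ) → (K₁ : ℝ) ≤ (n : ℝ) * p' →
            tiltCost q p' n Δ (K₀ : ℝ) ≤ tiltCost q p' n Δ (K₁ : ℝ)) ∧
          |tiltCost q p' n Δ (K₀ : ℝ) -
              q ^ 2 / (2 * p * (2 - p - q)) * (((p - q) / q) * n - Δ) ^ 2 / (n : ℝ)|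
            ≤ M := by
  have hp0 : 0 < p := hq.trans hqp
  have hr : 0 < 1 - p := by linarith
  have hr' : 0 < 1 - q := by linarith
  have hpq : 0 < 2 - p - q := by linarith
  obtain ⟨C, hC⟩ : ∃ C, C = 2 * K / p := ⟨_, rfl⟩
  have hC0 : 0 < C := by rw [hC]; positivity
  have hCp : p * C = 2 * K := by rw [hC]; field_simp
  have hCK : 2 * K ≤ C := by nlinarith
  -- `θ T` is the value of `a` at the real minimizer
  obtain ⟨θ, hθ⟩ : ∃ θ, θ = (1 - q) / (2 - p - q) := ⟨_, rfl⟩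
  have hθ0 : 0 < θ := by rw [hθ]; positivity
  have hθ1 : θ ≤ 1 := by rw [hθ, div_le_one hpq]; linarith
  obtain ⟨η, hη0, hη1, hη2, hη3, hη4, hη5⟩ : ∃ η : ℝ, 0 < η ∧ η ≤ 1 ∧ η * C ≤ p / 2 ∧
      η * C ≤ (1 - p) / 2 ∧ η * K ≤ q * δ / 2 ∧ η ≤ q * δ * θ / 2 := by
    have h : ∀ c : ℝ, 0 < c → ∀ᶠ η : ℝ in nhdsWithin 0 (Set.Ioi 0), η ≤ c := fun c hc =>
      nhdsWithin_le_nhds (Iic_mem_nhds hc)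
    have hpos : ∀ᶠ η : ℝ in nhdsWithin 0 (Set.Ioi 0), 0 < η := self_mem_nhdsWithin
    have hh := ((hpos.and
      (h 1 one_pos)).and ((h (p / 2 / C) (by positivity)).and
      (h ((1 - p) / 2 / C) (by positivity)))).and
      ((h (q * δ / 2 / K) (by positivity)).and (h (q * δ * θ / 2) (by positivity)))
    obtain ⟨η, ⟨⟨h0, h1⟩, h2, h3⟩, h4, h5⟩ := hh.exists
    exact ⟨η, h0, h1, (le_div_iff₀ hC0).1 h2, (le_div_iff₀ hC0).1 h3, (le_div_iff₀ hK).1 h4, h5⟩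
  obtain ⟨N, hN⟩ := eventually_sqrt_log_bounds hη0
  set M1 := 7 * C ^ 3 / ((1 - q) * p ^ 2) + 7 * C ^ 3 / (p * (1 - p) ^ 2) with hM1
  set M2 := 1 / (2 * (1 - q) * p) + 1 / (2 * p * (1 - p)) with hM2
  set M3 := 3 * K ^ 2 / (2 * p * (2 - p - q)) with hM3
  have hM1p : 0 < M1 := by positivity
  have hM2p : 0 < M2 := by positivity
  have hM3p : 0 < M3 := by positivity
  refine ⟨M1 + M2 + M3, by positivity, N, fun n hn Δ hlow hup p' hp' => ?_⟩
  obtain ⟨hn0, hL1, hLs, hsn, hsL, hs3⟩ := hN n hn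
  set L := Real.log n
  set s := √(n * L)
  set D' := ((p - q) / q) * n - Δ with hD'
  have hn1 : (1 : ℝ) ≤ n := by
    have : 0 < n := by exact_mod_cast hn0
    exact_mod_cast this
  have hs0 : 0 < s := by
    by_contra h
    have : η * s ≤ 0 := mul_nonpos_of_nonneg_of_nonpos hη0.le (not_lt.1 h)
    linarith
  have hLs1 : L ≤ s := hLs.trans (mul_le_of_le_one_left hs0.le hη1)
  have hNval : ((n : ℝ) + Δ) * q = p * n - q * D' := by
    rw [hD']; field_simp; ring
  obtain ⟨e, he⟩ : ∃ e, e = n * (p' - p) := ⟨_, rfl⟩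
  have heL : |e| ≤ K * L := by
    rw [he, abs_mul, abs_of_pos hn0]
    rw [le_div_iff₀ hn0] at hp'
    linarith
  have heL' := abs_le.1 heL
  have hnp' : (n : ℝ) * p' = p * n + e := by rw [he]; ring
  have hD'0 : 0 ≤ D' := le_trans (by positivity) hlow
  have hq1 : q < 1 := by linarith
  have hDs : q * D' ≤ K * s :=
    (mul_le_of_le_one_left hD'0 hq1.le).trans hup
  have hDs0 : 0 ≤ q * D' := by positivity
  have hKL : K * L ≤ K * s := by gcongr
  have hCs : 2 * K * s ≤ C * s := by gcongr
  have hKs : 0 < K * s := by positivity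
  have hbound : ∀ x : ℝ, ((n : ℝ) + Δ) * q ≤ x → x ≤ n * p' →
      |tiltCost q p' n Δ x - ((x - ((n : ℝ) + Δ) * q) ^ 2 / (2 * (1 - q) * p * n)
        + (n * p' - x) ^ 2 / (2 * p * (1 - p) * n))| ≤ M1 := by
    intro x hx1 hx2
    rw [hNval] at hx1
    rw [hnp'] at hx2
    refine abs_tiltCost_sub_le hq hqp hp hC0 hs0 hn0 ?_ ?_ ?_ ?_ ?_ ?_ ?_ ?_ ?_ ?_
    · exact hs3.trans (mul_le_of_le_one_left (by positivity) hη1)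
    · calc C * s ≤ C * (η * n) := by gcongr
        _ = η * C * n := by ring
        _ ≤ p / 2 * n := by gcongr
        _ = _ := by ring
    · calc C * s ≤ C * (η * n) := by gcongr
        _ = η * C * n := by ring
        _ ≤ (1 - p) / 2 * n := by gcongr
        _ = _ := by ring
    · rw [hNval, abs_le]; constructor <;> linarith
    · have h : n * |p' - p| = |e| := by rw [he, abs_mul, abs_of_pos hn0]
      have h2 : p / 2 * (C * s) = K * s := by linear_combination s / 2 * hCp
      rw [h, h2]
      linarith
    · rw [abs_le]; constructor <;> linarith
    all_goals first | rw [hNval] | rw [hnp']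
    all_goals linarith
  obtain ⟨A, hA⟩ : ∃ A, A = 2 * (1 - q) * p * n := ⟨_, rfl⟩
  obtain ⟨B, hB⟩ : ∃ B, B = 2 * p * (1 - p) * n := ⟨_, rfl⟩
  have hA0 : 0 < A := by rw [hA]; positivity
  have hB0 : 0 < B := by rw [hB]; positivity
  have hAB : A + B = 2 * p * (2 - p - q) * n := by rw [hA, hB]; ring
  have hθAB : A / (A + B) = θ := by rw [hAB, hA, hθ]; field_simp
  obtain ⟨T, hT⟩ : ∃ T, T = q * D' + e := ⟨_, rfl⟩
  -- The feasible interval has length `T`, which exceeds `1 / θ`; this leaves room to round the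
  -- real minimizer down to an integer.
  have hTθ : 1 ≤ θ * T := by
    have h0 : q * (δ * s) ≤ q * D' := by gcongr
    have h0' : K * L ≤ q * δ / 2 * s := by
      calc K * L ≤ K * (η * s) := by gcongr
        _ = η * K * s := by ring
        _ ≤ q * δ / 2 * s := by gcongr
    have h1 : q * δ / 2 * s ≤ T := by rw [hT]; linarith
    have h2 : 1 ≤ η * s := hL1.trans hLs
    have h3 : η * s ≤ q * δ * θ / 2 * s := by gcongr
    have h4 : θ * (q * δ / 2 * s) ≤ θ * T := by gcongr
    linarith
  have hT0 : 0 < T := by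
    by_contra h
    have : θ * T ≤ 0 := mul_nonpos_of_nonneg_of_nonpos hθ0.le (not_lt.1 h)
    linarith
  have hquad : ∀ x : ℝ, (x - ((n : ℝ) + Δ) * q) ^ 2 / (2 * (1 - q) * p * n)
      + (n * p' - x) ^ 2 / (2 * p * (1 - p) * n)
      = T ^ 2 / (A + B) + (x - ((n : ℝ) + Δ) * q - θ * T) ^ 2 * (1 / A + 1 / B) := by
    intro x
    rw [← hA, ← hB, sq_div_add_sq_div hA0 hB0, hθAB,
      show x - ((n : ℝ) + Δ) * q + (n * p' - x) = T by rw [hNval, hnp', hT]; ring]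
  obtain ⟨k, hk⟩ : ∃ k : ℤ, k = ⌊((n : ℝ) + Δ) * q + θ * T⌋ := ⟨_, rfl⟩
  have hk1 : (k : ℝ) ≤ ((n : ℝ) + Δ) * q + θ * T := hk ▸ Int.floor_le _
  have hk2 : ((n : ℝ) + Δ) * q + θ * T < k + 1 := hk ▸ Int.lt_floor_add_one _
  have hkl : ((n : ℝ) + Δ) * q ≤ k := by linarith
  have hku : (k : ℝ) ≤ n * p' := by
    have : θ * T ≤ T := mul_le_of_le_one_left hT0.le hθ1
    rw [hNval] at hk1
    rw [hnp']
    linarith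
  obtain ⟨K₀, hK₀, hmin⟩ := Finset.exists_min_image
    (Finset.Icc ⌈((n : ℝ) + Δ) * q⌉ ⌊(n : ℝ) * p'⌋) (fun z : ℤ => tiltCost q p' n Δ (z : ℝ))
    ⟨k, Finset.mem_Icc.2 ⟨Int.ceil_le.2 hkl, Int.le_floor.2 hku⟩⟩
  have hK₀' := Finset.mem_Icc.1 hK₀
  have hK₀l : ((n : ℝ) + Δ) * q ≤ K₀ := Int.ceil_le.1 hK₀'.1
  have hK₀u : (K₀ : ℝ) ≤ n * p' := Int.le_floor.1 hK₀'.2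
  have hmin' : ∀ K₁ : ℤ, ((n : ℝ) + Δ) * q ≤ (K₁ : ℝ) → (K₁ : ℝ) ≤ (n : ℝ) * p' →
      tiltCost q p' n Δ (K₀ : ℝ) ≤ tiltCost q p' n Δ (K₁ : ℝ) := fun K₁ h1 h2 =>
    hmin K₁ (Finset.mem_Icc.2 ⟨Int.ceil_le.2 h1, Int.le_floor.2 h2⟩)
  refine ⟨K₀, hK₀l, hK₀u, hmin', ?_⟩
  have b1 := abs_le.1 (hbound K₀ hK₀l hK₀u)
  have b2 := abs_le.1 (hbound k hkl hku)
  rw [hquad] at b1 b2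
  have b3 := hmin' k hkl hku
  have hinv : 0 < 1 / A + 1 / B := by positivity
  have hinvM : 1 / A + 1 / B ≤ M2 := by
    rw [hM2, hA, hB]
    refine add_le_add ?_ ?_ <;>
      exact one_div_le_one_div_of_le (by positivity)
        (le_mul_of_one_le_right (by positivity) hn1)
  have b4 : 0 ≤ ((K₀ : ℝ) - ((n : ℝ) + Δ) * q - θ * T) ^ 2 * (1 / A + 1 / B) := by positivity
  have b5 : ((k : ℝ) - ((n : ℝ) + Δ) * q - θ * T) ^ 2 * (1 / A + 1 / B) ≤ M2 := by
    have : ((k : ℝ) - ((n : ℝ) + Δ) * q - θ * T) ^ 2 ≤ 1 := by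
      rw [sq_le_one_iff_abs_le_one, abs_le]; constructor <;> linarith
    exact (mul_le_of_le_one_left hinv.le this).trans hinvM
  -- replacing `T` by `D = q Δ'` costs `(2 D e + e²) / (A + B)`, and `s L ≤ n`
  have b6 : |T ^ 2 / (A + B) - q ^ 2 / (2 * p * (2 - p - q)) * D' ^ 2 / (n : ℝ)| ≤ M3 := by
    have h : T ^ 2 / (A + B) - q ^ 2 / (2 * p * (2 - p - q)) * D' ^ 2 / (n : ℝ)
        = (2 * (q * D') + e) * e / (2 * p * (2 - p - q) * n) := by
      rw [hAB, hT]; field_simp; ring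
    rw [h, abs_div, abs_mul, abs_of_pos (by positivity : 0 < 2 * p * (2 - p - q) * (n : ℝ))]
    have h1 : |2 * (q * D') + e| ≤ 3 * (K * s) := by
      rw [abs_le]; constructor <;> linarith
    calc |2 * (q * D') + e| * |e| / (2 * p * (2 - p - q) * n)
        ≤ 3 * (K * s) * (K * L) / (2 * p * (2 - p - q) * n) := by gcongr
      _ = 3 * K ^ 2 * (s * L) / (2 * p * (2 - p - q) * n) := by ring
      _ ≤ 3 * K ^ 2 * n / (2 * p * (2 - p - q) * n) := by
          gcongr
          exact hsL.trans (mul_le_of_le_one_left hn0.le hη1)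
      _ = M3 := by rw [hM3]; field_simp
  have b7 := abs_le.1 b6
  rw [abs_le]
  constructor <;> linarith
end
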